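/- arXiv:1703.01850 — 2 statements merged into one kernel-verified Lean document; each statement's English description precedes it below -/
import Mathlib

section
/- (Green's theorem) Let L be the union of five lines in general position in the complex projective plane P²(ℂ), where general position means that no three of the lines pass through a common point. Then the complement P²(ℂ) \ L is hyperbolic: every holomorphic map f : ℂ → P²(ℂ) whose image avoids L is constant. -/
/- Green's theorem: the complement of five lines in general position in `P²(ℂ)` is
hyperbolic.

The complex projective plane is `Projectivization ℂ (Fin 3 → ℂ)`.  A map
`f : ℂ → P²(ℂ)` is holomorphic iff around every point it admits a nonvanishing
holomorphic lift to `ℂ³ \ {0}`; this is the predicate `HoloToProj`.  A line is the zero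
locus of a nonzero linear form `L i`; the point `x` lies on it iff `L i x.rep = 0`
(a scale-invariant condition).  General position means no point lies on three of
the lines (no triple point). -/

open Metric Filter
open scoped Manifold Topology

noncomputable section

/-- A map from `ℂ` to a projective space is holomorphic if it locally admits nonvanishing
holomorphic lifts. -/
def HoloToProj {m : ℕ} (f : ℂ → Projectivization ℂ (Fin m → ℂ)) : Prop :=
  ∀ z₀ : ℂ, ∃ W : Set ℂ, IsOpen W ∧ z₀ ∈ W ∧ ∃ F : ℂ → (Fin m → ℂ),
    DifferentiableOn ℂ F W ∧ ∀ z ∈ W, ∃ h : F z ≠ 0, f z = Projectivization.mk ℂ (F z) h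

/-!
The quotients of two of the linear forms along the curve are entire functions without zeros, and
any `N + 1` of the forms span the dual space. Borel's theorem, that an entire function without
zeros lying in the linear span of such functions is proportional to one of them, therefore shows
that along the curve each form is proportional to all but at most `N` of the forms, hence to at
least `N + 1` of them. The values of `N + 1` forms up to a common factor determine the point.

For Borel's theorem it suffices that if `fᵢ = exp pᵢ` are linearly independent with `∑ᵢ fᵢ = 1`,
then every `pᵢ` is constant. The sequences of Taylor coefficients at `0` of the `fᵢ` are linearly
independent, so some generalized Wronskian `det (fᵢ^(kⱼ))` does not vanish there. Let `D` be this
determinant divided by `∏ᵢ fᵢ`. Since `∑ᵢ fᵢ = 1`, each `fᵢ D` is again of this form, with `fᵢ`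
replaced by `1`, and so `|D| ∑ᵢ |fᵢ|` is bounded by a power of `maxᵢ |pᵢ'|`. By Jensen's inequality
for `D`, the Cartan characteristic `T r`, the mean of `log ∑ᵢ |fᵢ|` on the circle `|z| = r`, is at
most `O(log maxᵢ |pᵢ'|)`. The Poisson formula, the Borel–Carathéodory theorem and Borel's growth
lemma bound `|pᵢ'|` by a polynomial in `r` and `T r` for arbitrarily large `r`. Hence
`T r = O(log r)` for arbitrarily large `r`, and Liouville's argument makes the `pᵢ` constant.
-/

theorem span_range_flip_eq_top_of_linearIndependent {ι κ K : Type*} [Finite ι] [Field K]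
    {v : ι → κ → K} (hv : LinearIndependent K v) :
    Submodule.span K (Set.range (flip v)) = ⊤ := by
  classical
  have := Fintype.ofFinite ι
  by_contra hspan
  obtain ⟨g, hg, hker⟩ := Submodule.exists_le_ker_of_lt_top _ (lt_top_iff_ne_top.2 hspan)
  have hrel : ∑ i, g (Pi.single i 1) • v i = 0 := by
    ext n
    have : g (flip v n) = 0 := hker (Submodule.subset_span ⟨n, rfl⟩)
    rw [pi_eq_sum_univ' (flip v n)] at this
    simpa [flip, mul_comm] using this
  refine hg (LinearMap.pi_ext' fun i => LinearMap.ext_ring ?_)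
  simpa using Fintype.linearIndependent_iff.1 hv _ hrel i

theorem exists_det_ne_zero_of_linearIndependent {ι κ K : Type*} [Fintype ι] [DecidableEq ι]
    [Field K] {v : ι → κ → K} (hv : LinearIndependent K v) :
    ∃ k : ι → κ, (Matrix.of fun i j => v i (k j)).det ≠ 0 := by
  obtain ⟨σ, k, -, hspan, hli⟩ := exists_linearIndependent' K (flip v)
  rw [span_range_flip_eq_top_of_linearIndependent hv] at hspan
  let b := Module.Basis.mk hli hspan.ge
  let e : ι ≃ σ := (Pi.basisFun K ι).indexEquiv b
  refine ⟨k ∘ e, ?_⟩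
  have hcols : LinearIndependent K (Matrix.of fun i j => v i (k (e j))).col :=
    hli.comp e e.injective
  exact ((Matrix.isUnit_iff_isUnit_det _).1
    (Matrix.linearIndependent_cols_iff_isUnit.1 hcols)).ne_zero

theorem linearIndependent_iteratedDeriv {ι : Type*} {f : ι → ℂ → ℂ}
    (hf : ∀ i, Differentiable ℂ (f i)) (hli : LinearIndependent ℂ f) (a : ℂ) :
    LinearIndependent ℂ fun i n => iteratedDeriv n (f i) a := by
  rw [linearIndependent_iff'] at hli ⊢
  refine fun s c hc => hli s c (funext fun z => ?_)
  have hd : Differentiable ℂ fun z => ∑ i ∈ s, c i * f i z := by fun_prop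
  have hderiv (n : ℕ) : iteratedDeriv n (fun z => ∑ i ∈ s, c i * f i z) a = 0 := by
    rw [iteratedDeriv_fun_sum fun i _ => (contDiff_const.mul (hf i).contDiff).contDiffAt]
    simpa [iteratedDeriv_const_mul_field] using congrFun hc n
  have htaylor := Complex.taylorSeries_eq_of_entire' a z hd
  simpa [hderiv] using htaylor.symm

theorem log_norm_le_circleAverage_log_norm {D : ℂ → ℂ} {c : ℂ} {R : ℝ} (hR : R ≠ 0)
    (hD : AnalyticOnNhd ℂ D (closedBall c |R|)) (hDc : D c ≠ 0) :
    Real.log ‖D c‖ ≤ Real.circleAverage (fun z => Real.log ‖D z‖) c R := by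
  have hzeros : 0 ≤ ∑ᶠ u, (MeromorphicOn.divisor D (closedBall c |R|) u : ℝ) *
      Real.log (R * ‖c - u‖⁻¹) := by
    refine finsum_nonneg fun u => ?_
    by_cases hu : u ∈ closedBall c |R|
    · refine mul_nonneg (mod_cast MeromorphicOn.AnalyticOnNhd.divisor_nonneg hD u) ?_
      rw [← Real.log_abs, abs_mul, abs_inv, abs_norm, ← div_eq_mul_inv, ← dist_eq_norm']
      rcases eq_or_ne u c with rfl | huc
      · simp
      · exact Real.log_nonneg ((one_le_div (dist_pos.2 huc)).2 hu)
    · simp [Function.locallyFinsuppWithin.apply_eq_zero_of_notMem _ hu]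
  rw [hD.circleAverage_log_norm hR hDc]
  exact le_add_of_nonneg_left hzeros

theorem circleAverage_le_log_sub_log {D : ℂ → ℂ} {φ : ℂ → ℝ} {c : ℂ} {R M : ℝ} (hR : R ≠ 0)
    (hD : AnalyticOnNhd ℂ D (closedBall c |R|)) (hDc : D c ≠ 0) (hφ : CircleIntegrable φ c R)
    (hM : ∀ z ∈ sphere c |R|, ‖D z‖ * Real.exp (φ z) ≤ M) :
    Real.circleAverage φ c R ≤ Real.log M - Real.log ‖D c‖ := by
  classical
  have hlog : CircleIntegrable (fun z => Real.log ‖D z‖) c R :=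
    MeromorphicOn.circleIntegrable_log_norm fun z hz =>
      (hD z (sphere_subset_closedBall hz)).meromorphicAt
  -- At the zeros of `D` the integrand `φ + log ‖D‖` has a junk value, but these are negligible.
  let g : ℂ → ℝ := fun z => if D z = 0 then Real.log M else φ z + Real.log ‖D z‖
  have hg : (fun z => φ z + Real.log ‖D z‖) =ᶠ[codiscreteWithin (sphere c |R|)] g := by
    have hne := hD.preimage_zero_mem_codiscreteWithin hDc (mem_closedBall_self (abs_nonneg R))
      ⟨⟨c, mem_closedBall_self (abs_nonneg R)⟩, (convex_closedBall c |R|).isPreconnected⟩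
    filter_upwards [codiscreteWithin_mono sphere_subset_closedBall hne] with z hz
    exact (if_neg (by simpa using hz)).symm
  have hgM : Real.circleAverage g c R ≤ Real.log M := by
    refine Real.circleAverage_mono_on_of_le_circle
      ((hφ.add hlog).congr_codiscreteWithin hg) fun z hz => ?_
    by_cases h0 : D z = 0
    · simp [g, h0]
    · have hpos : 0 < ‖D z‖ := norm_pos_iff.2 h0
      calc g z = Real.log (‖D z‖ * Real.exp (φ z)) := by
            rw [Real.log_mul hpos.ne' (Real.exp_ne_zero _), Real.log_exp, add_comm]
            exact if_neg h0
        _ ≤ Real.log M := Real.log_le_log (by positivity) (hM z hz)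
  rw [← Real.circleAverage_congr_codiscreteWithin hg hR, Real.circleAverage_fun_add hφ hlog] at hgM
  linarith [log_norm_le_circleAverage_log_norm hR hD hDc]

theorem harmonicOnNhd_le_mul_circleAverage {h φ : ℂ → ℝ} {c w : ℂ} {R : ℝ}
    (hh : InnerProductSpace.HarmonicOnNhd h (closedBall c R)) (hφ : CircleIntegrable φ c R)
    (hφ0 : ∀ z ∈ sphere c R, 0 ≤ φ z) (hle : ∀ z ∈ sphere c R, h z ≤ φ z) (hw : w ∈ ball c R) :
    h w ≤ (R + ‖w - c‖) / (R - ‖w - c‖) * Real.circleAverage φ c R := by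
  have hwR : ‖w - c‖ < R := by simpa [dist_eq_norm] using hw
  have hR : |R| = R := abs_of_pos ((norm_nonneg _).trans_lt hwR)
  have hhc : ContinuousOn h (sphere c |R|) :=
    hh.continuousOn.mono (hR.symm ▸ sphere_subset_closedBall)
  have hk : ContinuousOn (Complex.re ∘ herglotzRieszKernel c w) (sphere c |R|) :=
    Complex.continuous_re.comp_continuousOn (continuousOn_herglotzRieszKernel_sphere hw)
  rw [← hh.circleAverage_re_herglotzRieszKernel_smul hw, ← smul_eq_mul,
    ← Real.circleAverage_fun_smul]
  refine Real.circleAverage_mono (hk.smul hhc).circleIntegrable' hφ.const_fun_smul fun z hz => ?_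
  rw [hR] at hz
  have hk0 : 0 ≤ (herglotzRieszKernel c w z).re :=
    (div_nonneg (by linarith) (by linarith [norm_nonneg (w - c)])).trans
      (le_re_herglotzRieszKernel hz hw)
  calc (herglotzRieszKernel c w z).re * h z ≤ (herglotzRieszKernel c w z).re * φ z :=
        mul_le_mul_of_nonneg_left (hle z hz) hk0
    _ ≤ (R + ‖w - c‖) / (R - ‖w - c‖) * φ z :=
        mul_le_mul_of_nonneg_right (re_herglotzRieszKernel_le hz hw) (hφ0 z hz)

section DerivativeEstimates

variable {p : ℂ → ℂ} {φ : ℂ → ℝ} {R δ A : ℝ} {z : ℂ}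

theorem re_le_of_circleAverage_le (hp : Differentiable ℂ p) (hφ : Continuous φ)
    (hφ0 : ∀ z, 0 ≤ φ z) (hpφ : ∀ z, (p z).re ≤ φ z) (hδ : 0 < δ)
    (hA : Real.circleAverage φ 0 R ≤ A) (hz : ‖z‖ ≤ R - δ) :
    (p z).re ≤ 2 * R * A / δ := by
  have hz0 := norm_nonneg z
  have hA0 : 0 ≤ A := (Real.circleAverage_nonneg_of_nonneg fun z _ => hφ0 z).trans hA
  have hpoisson : (p z).re ≤ (R + ‖z‖) / (R - ‖z‖) * Real.circleAverage φ 0 R := by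
    simpa using harmonicOnNhd_le_mul_circleAverage (h := fun z => (p z).re) (w := z)
      (fun z _ => (hp.analyticAt z).harmonicAt_re)
      hφ.continuousOn.circleIntegrable' (fun z _ => hφ0 z) (fun z _ => hpφ z)
      (mem_ball_zero_iff.2 (hz.trans_lt (sub_lt_self R hδ)))
  calc (p z).re ≤ (R + ‖z‖) / (R - ‖z‖) * A := hpoisson.trans <|
        mul_le_mul_of_nonneg_left hA (div_nonneg (by linarith) (by linarith))
    _ ≤ 2 * R / δ * A :=
        mul_le_mul_of_nonneg_right (div_le_div₀ (by linarith) (by linarith) hδ (by linarith)) hA0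
    _ = 2 * R * A / δ := by ring

theorem norm_le_of_circleAverage_le (hp : Differentiable ℂ p) (hφ : Continuous φ)
    (hφ0 : ∀ z, 0 ≤ φ z) (hpφ : ∀ z, (p z).re ≤ φ z) (hδ : 0 < δ)
    (hA : Real.circleAverage φ 0 R ≤ A) (hA0 : 0 < A) (hz : ‖z‖ ≤ R - 2 * δ) :
    ‖p z‖ ≤ 2 * R * (2 * R * A / δ + ‖p 0‖) / δ := by
  have hz0 := norm_nonneg z
  have hR : 0 < R := by linarith
  have hre : Set.MapsTo p (ball 0 (R - δ)) {w | w.re ≤ 2 * R * A / δ} := fun w hw =>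
    re_le_of_circleAverage_le hp hφ hφ0 hpφ hδ hA (mem_ball_zero_iff.1 hw).le
  refine (Complex.borelCaratheodory (by positivity) hp.differentiableOn hre (by linarith)
    (by simp; linarith)).trans ?_
  rw [← add_div]
  refine div_le_div₀ (by positivity) ?_ hδ (by linarith)
  calc 2 * (2 * R * A / δ) * ‖z‖ + ‖p 0‖ * (R - δ + ‖z‖)
      ≤ 2 * (2 * R * A / δ) * R + ‖p 0‖ * (2 * R) := by gcongr <;> linarith
    _ = 2 * R * (2 * R * A / δ + ‖p 0‖) := by ring

theorem norm_deriv_le_of_circleAverage_le (hp : Differentiable ℂ p) (hφ : Continuous φ)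
    (hφ0 : ∀ z, 0 ≤ φ z) (hpφ : ∀ z, (p z).re ≤ φ z) (hδ : 0 < δ)
    (hA : Real.circleAverage φ 0 R ≤ A) (hA0 : 0 < A) (hz : ‖z‖ ≤ R - 3 * δ) :
    ‖deriv p z‖ ≤ 2 * R * (2 * R * A / δ + ‖p 0‖) / δ ^ 2 := by
  rw [pow_two, ← div_div]
  refine Complex.norm_deriv_le_of_forall_mem_sphere_norm_le hδ hp.diffContOnCl fun w hw => ?_
  refine norm_le_of_circleAverage_le hp hφ hφ0 hpφ hδ hA hA0 ?_
  linarith [norm_le_norm_add_norm_sub' w z, mem_sphere_iff_norm.1 hw]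

theorem norm_deriv_le_of_circleAverage_add_inv_le {r t c : ℝ} (hp : Differentiable ℂ p)
    (hφ : Continuous φ) (hφ0 : ∀ z, 0 ≤ φ z) (hpφ : ∀ z, (p z).re ≤ φ z) (hr : 1 ≤ r)
    (ht : 1 ≤ t) (hc : ‖p 0‖ ≤ c) (hA : Real.circleAverage φ 0 (r + t⁻¹) ≤ 2 * t)
    (hz : ‖z‖ ≤ r + t⁻¹ / 4) :
    ‖deriv p z‖ ≤ 64 * (32 + c) * r ^ 2 * t ^ 4 := by
  have hR : r + t⁻¹ ≤ 2 * r := by linarith [inv_le_one_of_one_le₀ ht]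
  have hc' : ‖p 0‖ ≤ c * (r * t ^ 2) := hc.trans <| le_mul_of_one_le_right
    ((norm_nonneg _).trans hc) (one_le_mul_of_one_le_of_one_le hr (one_le_pow₀ ht))
  calc ‖deriv p z‖
      ≤ 2 * (r + t⁻¹) * (2 * (r + t⁻¹) * (2 * t) / (t⁻¹ / 4) + ‖p 0‖) / (t⁻¹ / 4) ^ 2 :=
        norm_deriv_le_of_circleAverage_le hp hφ hφ0 hpφ (by positivity) hA (by positivity)
          (by linarith)
    _ ≤ 2 * (2 * r) * (2 * (2 * r) * (2 * t) / (t⁻¹ / 4) + c * (r * t ^ 2)) / (t⁻¹ / 4) ^ 2 := by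
        gcongr
    _ = 64 * (32 + c) * r ^ 2 * t ^ 4 := by field_simp; ring

end DerivativeEstimates

theorem frequently_comp_add_inv_le {T : ℝ → ℝ} (hT : Continuous T) (hT1 : ∀ r, 1 ≤ T r) :
    ∃ᶠ r in atTop, T (r + (T r)⁻¹) ≤ 2 * T r := by
  refine frequently_atTop.2 fun a => ?_
  by_contra! hgrow
  let s : ℕ → ℝ := fun n => (fun r => r + (T r)⁻¹)^[n] a
  have hsucc (n : ℕ) : s (n + 1) = s n + (T (s n))⁻¹ := Function.iterate_succ_apply' _ _ _
  have hs (n : ℕ) : a ≤ s n ∧ s n ≤ a + 2 - 2 * (2 ^ n)⁻¹ ∧ 2 ^ n ≤ T (s n) := by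
    induction n with
    | zero => simpa [s] using hT1 a
    | succ n ih =>
      obtain ⟨hlower, hupper, hpow⟩ := ih
      have hpos : 0 < (T (s n))⁻¹ := inv_pos.2 (one_pos.trans_le (hT1 _))
      have hstep : (T (s n))⁻¹ ≤ (2 ^ n)⁻¹ := inv_anti₀ (by positivity) hpow
      have hdouble := hgrow (s n) hlower
      rw [hsucc, pow_succ, mul_inv]
      exact ⟨by linarith, by linarith, by linarith⟩
  obtain ⟨B, hB⟩ := (isCompact_Icc (a := a) (b := a + 2)).bddAbove_image hT.continuousOn
  obtain ⟨n, hn⟩ := pow_unbounded_of_one_lt B one_lt_two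
  obtain ⟨hlower, hupper, hpow⟩ := hs n
  have hmem : s n ∈ Set.Icc a (a + 2) := ⟨hlower, hupper.trans (sub_le_self _ (by positivity))⟩
  exact (hn.trans_le hpow).not_ge (hB (Set.mem_image_of_mem T hmem))

theorem exists_le_add_mul_log {a K : ℝ} (hK : 0 < K) (m : ℕ) :
    ∃ A B : ℝ, ∀ r t : ℝ, 0 < r → 0 < t → t ≤ a + m * Real.log (K * r ^ 2 * t ^ 4) →
      t ≤ A + B * Real.log r := by
  refine ⟨2 * (a + m * Real.log K + 4 * m * Real.log (8 * (m + 1))), 4 * m,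
    fun r t hr ht h => ?_⟩
  have hm : (0 : ℝ) < 8 * (m + 1) := by positivity
  have hlog : 4 * m * Real.log t ≤ t / 2 + 4 * m * Real.log (8 * (m + 1)) := by
    have hlin := Real.log_le_sub_one_of_pos (div_pos ht hm)
    rw [Real.log_div ht.ne' hm.ne'] at hlin
    calc 4 * m * Real.log t ≤ 4 * m * (t / (8 * (m + 1)) + Real.log (8 * (m + 1))) := by
          gcongr; linarith
      _ ≤ 4 * (m + 1) * (t / (8 * (m + 1))) + 4 * m * Real.log (8 * (m + 1)) := by
          rw [mul_add]; gcongr; linarith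
      _ = t / 2 + 4 * m * Real.log (8 * (m + 1)) := by field_simp; ring
  rw [Real.log_mul (by positivity) (by positivity), Real.log_mul hK.ne' (by positivity),
    Real.log_pow, Real.log_pow] at h
  push_cast at h
  linarith

theorem exists_frequently_norm_deriv_le {ι : Type*} [Finite ι] {p : ι → ℂ → ℂ} {φ : ℂ → ℝ}
    (hp : ∀ i, Differentiable ℂ (p i)) (hφ : Continuous φ) (hφ0 : ∀ z, 0 ≤ φ z)
    (hpφ : ∀ i z, (p i z).re ≤ φ z) :
    ∃ K ≥ 1, ∃ᶠ r in atTop, ∀ N, N = K * r ^ 2 * (Real.circleAverage φ 0 r + 1) ^ 4 →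
      ∀ i z, ‖z‖ ≤ r + N⁻¹ → ‖deriv (p i) z‖ ≤ N := by
  obtain ⟨c, hc0, hc⟩ : ∃ c ≥ 0, ∀ i, ‖p i 0‖ ≤ c := by
    have := Fintype.ofFinite ι
    exact ⟨∑ i, ‖p i 0‖, by positivity, fun i =>
      Finset.single_le_sum (fun i _ => norm_nonneg (p i 0)) (Finset.mem_univ i)⟩
  let T : ℝ → ℝ := fun r => Real.circleAverage φ 0 r + 1
  have hT1 (r : ℝ) : 1 ≤ T r :=
    le_add_of_nonneg_left (Real.circleAverage_nonneg_of_nonneg fun z _ => hφ0 z)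
  have hT : Continuous T := by fun_prop
  refine ⟨64 * (32 + c), by linarith,
    ((frequently_comp_add_inv_le hT hT1).and_eventually (eventually_ge_atTop 1)).mono ?_⟩
  rintro r ⟨hTr, hr⟩ N hN i z hz
  have ht : 1 ≤ T r := hT1 r
  change N = 64 * (32 + c) * r ^ 2 * T r ^ 4 at hN
  have htN : T r * 4 ≤ N := by
    calc T r * 4 = 4 * 1 * T r := by ring
      _ ≤ 64 * (32 + c) * r ^ 2 * T r ^ 4 := by
        gcongr
        · linarith
        · exact one_le_pow₀ hr
        · exact le_self_pow₀ ht (by norm_num)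
      _ = N := hN.symm
  have hNt : N⁻¹ ≤ (T r)⁻¹ / 4 := by
    rw [div_eq_mul_inv, ← mul_inv]
    exact inv_anti₀ (by positivity) htN
  rw [hN]
  exact norm_deriv_le_of_circleAverage_add_inv_le (hp i) hφ hφ0 (hpφ i) hr ht (hc i)
    (by linarith) (by linarith)

theorem eq_of_frequently_circleAverage_le {p : ℂ → ℂ} {φ : ℂ → ℝ} {g : ℝ → ℝ}
    (hp : Differentiable ℂ p) (hφ : Continuous φ) (hφ0 : ∀ z, 0 ≤ φ z)
    (hpφ : ∀ z, (p z).re ≤ φ z) (hg : g =o[atTop] (id : ℝ → ℝ))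
    (hgφ : ∃ᶠ R in atTop, Real.circleAverage φ 0 R ≤ g R) (z w : ℂ) : p z = p w := by
  refine is_const_of_deriv_eq_zero hp (fun z => norm_le_zero_iff.1 ?_) z w
  have hlim : Tendsto (fun R => 2048 * (g R / R) + (2048 + 128 * ‖p 0‖) / R) atTop (𝓝 0) := by
    simpa using (hg.tendsto_div_nhds_zero.const_mul 2048).add
      (tendsto_const_nhds.div_atTop tendsto_id)
  refine ge_of_tendsto_of_frequently hlim
    ((hgφ.and_eventually (eventually_ge_atTop (2 * ‖z‖ + 1))).mono ?_)
  rintro R ⟨hRg, hRz⟩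
  have hz0 := norm_nonneg z
  have hR : 0 < R := by linarith
  have hg0 : 0 ≤ g R := (Real.circleAverage_nonneg_of_nonneg fun z _ => hφ0 z).trans hRg
  refine (norm_deriv_le_of_circleAverage_le hp hφ hφ0 hpφ (δ := R / 8) (A := g R + 1)
    (by positivity) (by linarith) (by linarith) (by linarith)).trans_eq ?_
  field_simp
  ring

section LogWronskian

variable {ι : Type*} [Fintype ι] [DecidableEq ι]

/-- The generalized Wronskian of the functions `fᵢ = exp ∘ pᵢ` with orders of differentiation
`k`, each row divided by `fᵢ`: the determinant of the matrix `fᵢ^(kⱼ) / fᵢ`. -/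
def logWronskian (p : ι → ℂ → ℂ) (k : ι → ℕ) (z : ℂ) : ℂ :=
  (Matrix.of fun i j =>
    Complex.exp (-p i z) * iteratedDeriv (k j) (fun w => Complex.exp (p i w)) z).det

variable {p : ι → ℂ → ℂ}

theorem differentiable_logWronskian (hp : ∀ i, Differentiable ℂ (p i)) (k : ι → ℕ) :
    Differentiable ℂ (logWronskian p k) := by
  have hderiv (i j : ι) : Differentiable ℂ (iteratedDeriv (k j) fun w => Complex.exp (p i w)) :=
    (hp i).cexp.contDiff.differentiable_iteratedDeriv (k j) (WithTop.coe_lt_top _)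
  unfold logWronskian
  simp only [Matrix.det_apply, Matrix.of_apply]
  fun_prop

theorem exists_logWronskian_ne_zero (hp : ∀ i, Differentiable ℂ (p i))
    (hli : LinearIndependent ℂ fun i z => Complex.exp (p i z)) (a : ℂ) :
    ∃ k : ι → ℕ, logWronskian p k a ≠ 0 := by
  obtain ⟨k, hk⟩ := exists_det_ne_zero_of_linearIndependent
    (linearIndependent_iteratedDeriv (fun i => (hp i).cexp) hli a)
  exact ⟨k, (Matrix.det_mul_column (fun i => Complex.exp (-p i a)) _).trans_ne
    (mul_ne_zero (Finset.prod_ne_zero_iff.2 fun i _ => Complex.exp_ne_zero _) hk)⟩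

-- Differentiating `∑ᵢ fᵢ = 1` shows that the rows of `fᵢ^(kⱼ)` add up to the row of `1^(kⱼ)`.
theorem exp_mul_logWronskian (hsum : ∀ z, ∑ i, Complex.exp (p i z) = 1)
    (hp : ∀ i, Differentiable ℂ (p i)) (k : ι → ℕ) (i₀ : ι) (z : ℂ) :
    Complex.exp (p i₀ z) * logWronskian p k z = logWronskian (Function.update p i₀ 0) k z := by
  rw [logWronskian, ← smul_eq_mul,
    ← Matrix.det_updateRow_sum _ i₀ fun i => Complex.exp (p i z), logWronskian]
  congr 1
  ext i j
  rcases eq_or_ne i i₀ with rfl | hi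
  · have hone : iteratedDeriv (k j) (fun w => ∑ i, Complex.exp (p i w)) z =
        iteratedDeriv (k j) (fun _ => 1) z := by simp only [hsum]
    rw [iteratedDeriv_fun_sum fun i _ => (hp i).cexp.contDiff.contDiffAt] at hone
    simp [← mul_assoc, ← Complex.exp_add, hone]
  · simp [hi]

-- The left-hand side is the `m`-th derivative at `z` of `exp (q - q z)`, which is bounded by `e` on
-- the disc of radius `1 / N`; this replaces the lemma on the logarithmic derivative.
theorem norm_exp_neg_mul_iteratedDeriv_exp_le {q : ℂ → ℂ} (hq : Differentiable ℂ q) {N : ℝ}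
    (hN : 0 < N) {z : ℂ} (hqN : ∀ w ∈ closedBall z N⁻¹, ‖deriv q w‖ ≤ N) (m : ℕ) :
    ‖Complex.exp (-q z) * iteratedDeriv m (fun w => Complex.exp (q w)) z‖ ≤
      m.factorial * Real.exp 1 * N ^ m := by
  rw [← iteratedDeriv_const_mul_field]
  simp only [← Complex.exp_add]
  have hexp : ∀ w ∈ sphere z N⁻¹, ‖Complex.exp (-q z + q w)‖ ≤ Real.exp 1 := fun w hw => by
    have hlip := (convex_closedBall z N⁻¹).norm_image_sub_le_of_norm_deriv_le
      (fun w _ => hq w) hqN (mem_closedBall_self (by positivity)) (sphere_subset_closedBall hw)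
    rw [mem_sphere_iff_norm.1 hw, mul_inv_cancel₀ hN.ne'] at hlip
    rw [Complex.norm_exp, neg_add_eq_sub]
    exact Real.exp_le_exp.2 ((Complex.re_le_norm _).trans hlip)
  have hcauchy := Complex.norm_iteratedDeriv_le_of_forall_mem_sphere_norm_le m (inv_pos.2 hN)
    (hq.const_add (-q z)).cexp.diffContOnCl hexp
  rwa [inv_pow, div_inv_eq_mul] at hcauchy

theorem exists_norm_logWronskian_le (k : ι → ℕ) :
    ∃ C > 0, ∃ m : ℕ, ∀ p : ι → ℂ → ℂ, (∀ i, Differentiable ℂ (p i)) → ∀ N ≥ 1, ∀ z,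
      (∀ i, ∀ w ∈ closedBall z N⁻¹, ‖deriv (p i) w‖ ≤ N) → ‖logWronskian p k z‖ ≤ C * N ^ m := by
  set n := Fintype.card ι
  set d := ∑ j, k j
  refine ⟨n.factorial * (d.factorial * Real.exp 1) ^ n, by positivity, d * n,
    fun p hp N hN z hpN => ?_⟩
  have hN0 : 0 < N := one_pos.trans_le hN
  have hentry (i j : ι) :
      ‖Complex.exp (-p i z) * iteratedDeriv (k j) (fun w => Complex.exp (p i w)) z‖ ≤
        d.factorial * Real.exp 1 * N ^ d := by
    have hkd : k j ≤ d := Finset.single_le_sum (fun j _ => (k j).zero_le) (Finset.mem_univ j)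
    exact (norm_exp_neg_mul_iteratedDeriv_exp_le (hp i) hN0 (hpN i) (k j)).trans (by gcongr)
  have hdet := Matrix.det_le (abv := IsAbsoluteValue.toAbsoluteValue (norm : ℂ → ℝ)) hentry
  rw [nsmul_eq_mul, mul_pow, ← pow_mul, ← mul_assoc] at hdet
  exact hdet

end LogWronskian

section CartanIntegrand

variable {ι : Type*} [Fintype ι] {p : ι → ℂ → ℂ}

/-- The integrand of Cartan's characteristic of the curve `[exp p₁ : ⋯ : exp pₙ]`; the sum of
the moduli of the coordinates takes the place of their maximum. -/
def cartanIntegrand (p : ι → ℂ → ℂ) (z : ℂ) : ℝ :=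
  Real.log (∑ i, Real.exp (p i z).re)

theorem exp_cartanIntegrand [Nonempty ι] (p : ι → ℂ → ℂ) (z : ℂ) :
    Real.exp (cartanIntegrand p z) = ∑ i, Real.exp (p i z).re :=
  Real.exp_log (Finset.sum_pos (fun _ _ => Real.exp_pos _) Finset.univ_nonempty)

theorem continuous_cartanIntegrand [Nonempty ι] (hp : ∀ i, Continuous (p i)) :
    Continuous (cartanIntegrand p) := by
  have hpos (z : ℂ) : ∑ i, Real.exp (p i z).re ≠ 0 :=
    exp_cartanIntegrand p z ▸ Real.exp_ne_zero _
  exact Continuous.log (by fun_prop) hpos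

theorem re_le_cartanIntegrand (p : ι → ℂ → ℂ) (i : ι) (z : ℂ) :
    (p i z).re ≤ cartanIntegrand p z := by
  have : Nonempty ι := ⟨i⟩
  rw [← Real.exp_le_exp, exp_cartanIntegrand]
  exact Finset.single_le_sum (f := fun i => Real.exp (p i z).re) (fun _ _ => by positivity)
    (Finset.mem_univ i)

theorem cartanIntegrand_nonneg {z : ℂ} (hsum : ∑ i, Complex.exp (p i z) = 1) :
    0 ≤ cartanIntegrand p z := by
  refine Real.log_nonneg ?_
  calc (1 : ℝ) = ‖∑ i, Complex.exp (p i z)‖ := by rw [hsum, norm_one]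
    _ ≤ ∑ i, ‖Complex.exp (p i z)‖ := norm_sum_le _ _
    _ = ∑ i, Real.exp (p i z).re := by simp only [Complex.norm_exp]

theorem exists_norm_logWronskian_mul_exp_cartanIntegrand_le [Nonempty ι] [DecidableEq ι]
    (hp : ∀ i, Differentiable ℂ (p i)) (hsum : ∀ z, ∑ i, Complex.exp (p i z) = 1) (k : ι → ℕ) :
    ∃ C > 0, ∃ m : ℕ, ∀ N ≥ 1, ∀ z, (∀ i, ∀ w ∈ closedBall z N⁻¹, ‖deriv (p i) w‖ ≤ N) →
      ‖logWronskian p k z‖ * Real.exp (cartanIntegrand p z) ≤ C * N ^ m := by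
  obtain ⟨C, hC, m, hbound⟩ := exists_norm_logWronskian_le k
  refine ⟨Fintype.card ι * C, by positivity, m, fun N hN z hpN => ?_⟩
  have hupdate (i₀ : ι) : ‖logWronskian (Function.update p i₀ 0) k z‖ ≤ C * N ^ m := by
    refine hbound _ (fun i => ?_) N hN z fun i w hw => ?_ <;> rcases eq_or_ne i i₀ with rfl | hi
    · simp
    · simpa [hi] using hp i
    · simpa [Pi.zero_def] using zero_le_one.trans hN
    · simpa [hi] using hpN i w hw
  calc ‖logWronskian p k z‖ * Real.exp (cartanIntegrand p z)
      = ∑ i, ‖logWronskian (Function.update p i 0) k z‖ := by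
        simp only [exp_cartanIntegrand, Finset.mul_sum, ← exp_mul_logWronskian hsum hp, norm_mul,
          Complex.norm_exp, mul_comm]
    _ ≤ Fintype.card ι * C * N ^ m := by
        rw [mul_assoc, ← nsmul_eq_mul]
        exact Finset.sum_le_card_nsmul _ _ _ fun i _ => hupdate i

theorem frequently_circleAverage_cartanIntegrand_le [Nonempty ι]
    (hp : ∀ i, Differentiable ℂ (p i)) (hli : LinearIndependent ℂ fun i z => Complex.exp (p i z))
    (hsum : ∀ z, ∑ i, Complex.exp (p i z) = 1) :
    ∃ A B : ℝ, ∃ᶠ r in atTop, Real.circleAverage (cartanIntegrand p) 0 r ≤ A + B * Real.log r := by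
  classical
  have hφ := continuous_cartanIntegrand fun i => (hp i).continuous
  have hφ0 (z : ℂ) : 0 ≤ cartanIntegrand p z := cartanIntegrand_nonneg (hsum z)
  obtain ⟨k, hk⟩ := exists_logWronskian_ne_zero hp hli 0
  obtain ⟨C, hC, m, hbound⟩ := exists_norm_logWronskian_mul_exp_cartanIntegrand_le hp hsum k
  obtain ⟨K, hK, hfreq⟩ := exists_frequently_norm_deriv_le hp hφ hφ0 (re_le_cartanIntegrand p)
  obtain ⟨A, B, hAB⟩ := exists_le_add_mul_log (a := 1 + Real.log C - Real.log ‖logWronskian p k 0‖)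
    (one_pos.trans_le hK) m
  refine ⟨A, B, (hfreq.and_eventually (eventually_ge_atTop 1)).mono ?_⟩
  rintro r ⟨hderiv, hr⟩
  have hr0 : 0 < r := one_pos.trans_le hr
  have ht : 1 ≤ Real.circleAverage (cartanIntegrand p) 0 r + 1 :=
    le_add_of_nonneg_left (Real.circleAverage_nonneg_of_nonneg fun z _ => hφ0 z)
  have hN : 1 ≤ K * r ^ 2 * (Real.circleAverage (cartanIntegrand p) 0 r + 1) ^ 4 :=
    one_le_mul_of_one_le_of_one_le (one_le_mul_of_one_le_of_one_le hK (one_le_pow₀ hr))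
      (one_le_pow₀ ht)
  have hjensen := circleAverage_le_log_sub_log hr0.ne'
    (fun z _ => (differentiable_logWronskian hp k).analyticAt z) hk
    hφ.continuousOn.circleIntegrable' fun z hz => hbound _ hN z fun i w hw =>
      hderiv _ rfl i w <| by
        rw [mem_sphere_zero_iff_norm, abs_of_pos hr0] at hz
        linarith [norm_le_norm_add_norm_sub' w z, mem_closedBall_iff_norm.1 hw]
  rw [Real.log_mul hC.ne' (by positivity), Real.log_pow] at hjensen
  linarith [hAB r _ hr0 (one_pos.trans_le ht) (by linarith)]

theorem eq_of_linearIndependent_exp_of_sum_exp_eq_one (hp : ∀ i, Differentiable ℂ (p i))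
    (hli : LinearIndependent ℂ fun i z => Complex.exp (p i z))
    (hsum : ∀ z, ∑ i, Complex.exp (p i z) = 1) (i : ι) (z w : ℂ) : p i z = p i w := by
  have : Nonempty ι := ⟨i⟩
  obtain ⟨A, B, hfreq⟩ := frequently_circleAverage_cartanIntegrand_le hp hli hsum
  exact eq_of_frequently_circleAverage_le (hp i)
    (continuous_cartanIntegrand fun i => (hp i).continuous)
    (fun z => cartanIntegrand_nonneg (hsum z)) (re_le_cartanIntegrand p i)
    ((Asymptotics.isLittleO_const_id_atTop A).add (Real.isLittleO_log_id_atTop.const_mul_left B))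
    hfreq z w

end CartanIntegrand

/-- The units of the ring of entire functions. -/
structure IsEntireUnit (u : ℂ → ℂ) : Prop where
  differentiable : Differentiable ℂ u
  ne_zero : ∀ z, u z ≠ 0

namespace IsEntireUnit

theorem mul {u v : ℂ → ℂ} (hu : IsEntireUnit u) (hv : IsEntireUnit v) : IsEntireUnit (u * v) :=
  ⟨hu.differentiable.mul hv.differentiable, fun z => mul_ne_zero (hu.ne_zero z) (hv.ne_zero z)⟩

theorem inv {u : ℂ → ℂ} (hu : IsEntireUnit u) : IsEntireUnit u⁻¹ :=
  ⟨hu.differentiable.inv hu.ne_zero, fun z => inv_ne_zero (hu.ne_zero z)⟩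

theorem const_smul {u : ℂ → ℂ} (hu : IsEntireUnit u) {c : ℂ} (hc : c ≠ 0) :
    IsEntireUnit (c • u) :=
  ⟨hu.differentiable.const_smul c, fun z => smul_ne_zero hc (hu.ne_zero z)⟩

theorem exists_exp_eq {u : ℂ → ℂ} (hu : IsEntireUnit u) :
    ∃ p : ℂ → ℂ, Differentiable ℂ p ∧ ∀ z, Complex.exp (p z) = u z := by
  have hlogDeriv : Differentiable ℂ fun z => deriv u z / u z :=
    hu.differentiable.deriv.div hu.differentiable hu.ne_zero
  obtain ⟨p, hp0, hp⟩ := hlogDeriv.isExactOn_univ.with_val_at 0 (Complex.log (u 0))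
  replace hp (z : ℂ) : HasDerivAt p (deriv u z / u z) z := hp z (Set.mem_univ z)
  have hquot (z : ℂ) : HasDerivAt (fun w => Complex.exp (p w) / u w) 0 z := by
    refine ((hp z).cexp.fun_div (hu.differentiable z).hasDerivAt (hu.ne_zero z)).congr_deriv ?_
    field_simp [hu.ne_zero z]
    ring
  refine ⟨p, fun z => (hp z).differentiableAt, fun z => ?_⟩
  have hconst := is_const_of_deriv_eq_zero (fun z => (hquot z).differentiableAt)
    (fun z => (hquot z).deriv) z 0
  rwa [hp0, Complex.exp_log (hu.ne_zero 0), div_self (hu.ne_zero 0),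
    div_eq_one_iff_eq (hu.ne_zero z)] at hconst

theorem eq_of_linearIndependent_of_sum_eq_one {ι : Type*} [Fintype ι]
    {u : ι → ℂ → ℂ} (hu : ∀ i, IsEntireUnit (u i)) (hli : LinearIndependent ℂ u)
    (hsum : ∑ i, u i = 1) (i : ι) (z w : ℂ) : u i z = u i w := by
  choose p hp hpu using fun i => (hu i).exists_exp_eq
  obtain rfl : (fun i z => Complex.exp (p i z)) = u := funext fun i => funext (hpu i)
  have hexp (z : ℂ) : ∑ i, Complex.exp (p i z) = 1 := by simpa using congrFun hsum z
  exact congrArg Complex.exp (eq_of_linearIndependent_exp_of_sum_exp_eq_one hp hli hexp i z w)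

theorem div_eq_div_of_linearIndependent_of_sum_eq {ι : Type*} [Fintype ι]
    {u : ι → ℂ → ℂ} {g : ℂ → ℂ} (hu : ∀ i, IsEntireUnit (u i)) (hg : IsEntireUnit g)
    (hli : LinearIndependent ℂ u) (hsum : ∑ i, u i = g) (i : ι) (z w : ℂ) :
    u i z / g z = u i w / g w := by
  have hli' : LinearIndependent ℂ fun i => u i * g⁻¹ := by
    rw [Fintype.linearIndependent_iff] at hli ⊢
    refine fun c hc => hli c (funext fun z => ?_)
    have hcz : (∑ i, c i * u i z) * (g z)⁻¹ = 0 := by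
      simpa [Finset.sum_mul, mul_assoc] using congrFun hc z
    simpa [hg.ne_zero z] using hcz
  have hsum' : ∑ i, u i * g⁻¹ = 1 := by
    rw [← Finset.sum_mul, hsum]
    exact funext fun z => mul_inv_cancel₀ (hg.ne_zero z)
  exact eq_of_linearIndependent_of_sum_eq_one (fun i => (hu i).mul hg.inv) hli' hsum' i z w

theorem exists_eq_smul_of_mem_span {U : Set (ℂ → ℂ)} {g : ℂ → ℂ}
    (hU : ∀ u ∈ U, IsEntireUnit u) (hg : IsEntireUnit g) (hgU : g ∈ Submodule.span ℂ U) :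
    ∃ u ∈ U, ∃ c : ℂ, g = c • u := by
  obtain ⟨B, hBU, hspan, hB⟩ := exists_linearIndependent ℂ U
  rw [← hspan, Submodule.mem_span_set] at hgU
  obtain ⟨c, hcB, hcg⟩ := hgU
  have hc (b : c.support) : c b ≠ 0 := Finsupp.mem_support_iff.1 b.2
  have hunit (b : c.support) : IsEntireUnit (c b • (b : ℂ → ℂ)) :=
    (hU b (hBU (hcB b.2))).const_smul (hc b)
  have hli : LinearIndependent ℂ fun b : c.support => c b • (b : ℂ → ℂ) :=
    (hB.comp (Set.inclusion hcB) (Set.inclusion_injective hcB)).units_smul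
      fun b => Units.mk0 (c b) (hc b)
  have hsum : ∑ b : c.support, c b • (b : ℂ → ℂ) = g :=
    (Finset.sum_coe_sort c.support fun b => c b • b).trans hcg
  obtain ⟨b, hb⟩ : c.support.Nonempty := Finset.nonempty_iff_ne_empty.2 fun h =>
    hg.ne_zero 0 (by simp [← hcg, Finsupp.sum, h])
  have hb0 : b 0 ≠ 0 := (hU b (hBU (hcB hb))).ne_zero 0
  refine ⟨b, hBU (hcB hb), g 0 / b 0, funext fun z => ?_⟩
  have hratio := hg.div_eq_div_of_linearIndependent_of_sum_eq hunit hli hsum ⟨b, hb⟩ z 0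
  simp only [Pi.smul_apply, smul_eq_mul, div_eq_div_iff (hg.ne_zero z) (hg.ne_zero 0)] at hratio ⊢
  rw [div_mul_eq_mul_div, eq_div_iff hb0]
  exact mul_left_cancel₀ (hc ⟨b, hb⟩) (by linear_combination -hratio)

end IsEntireUnit

section InSubgeneralPosition

variable {ι K V : Type*} [Field K] [AddCommGroup V] [Module K V] {N : ℕ} {L : ι → V →ₗ[K] K}

/-- Linear forms in `N`-subgeneral position: any `N + 1` of them have no common nontrivial zero.
On a space of dimension `N + 1` this is general position of the hyperplanes they cut out. -/
def InSubgeneralPosition (N : ℕ) (L : ι → V →ₗ[K] K) : Prop :=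
  ∀ s : Finset ι, s.card = N + 1 → ∀ v, (∀ i ∈ s, L i v = 0) → v = 0

theorem InSubgeneralPosition.mem_span_image (hL : InSubgeneralPosition N L) {s : Finset ι}
    (hs : s.card = N + 1) (M : V →ₗ[K] K) : M ∈ Submodule.span K (L '' s) := by
  rw [Set.image_eq_range]
  refine mem_span_of_iInf_ker_le_ker fun v hv => ?_
  obtain rfl : v = 0 := hL s hs v (by simpa using hv)
  exact map_zero M

theorem InSubgeneralPosition.eq_of_forall_eq_mul (hL : InSubgeneralPosition N L) {s : Finset ι}
    (hs : s.card = N + 1) {M : V →ₗ[K] K} {x y : Projectivization K V} (hx : M x.rep ≠ 0)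
    (hy : M y.rep ≠ 0) (hM : ∀ i ∈ s, ∃ c, M x.rep = c * L i x.rep ∧ M y.rep = c * L i y.rep) :
    x = y := by
  rw [← x.mk_rep, ← y.mk_rep, Projectivization.mk_eq_mk_iff']
  refine ⟨M x.rep / M y.rep, sub_eq_zero.1 (hL s hs _ fun i hi => ?_)⟩
  obtain ⟨c, hcx, hcy⟩ := hM i hi
  have hc : c ≠ 0 := left_ne_zero_of_mul (hcx ▸ hx)
  have hLy : L i y.rep ≠ 0 := right_ne_zero_of_mul (hcy ▸ hy)
  rw [map_sub, map_smul, smul_eq_mul, hcx, hcy]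
  field_simp
  ring

end InSubgeneralPosition

section HolomorphicCurves

variable {d : ℕ} {f : ℂ → Projectivization ℂ (Fin d → ℂ)}

theorem HoloToProj.differentiable_div (hf : HoloToProj f) (M : (Fin d → ℂ) →ₗ[ℂ] ℂ)
    {L : (Fin d → ℂ) →ₗ[ℂ] ℂ} (hL : ∀ z, L (f z).rep ≠ 0) :
    Differentiable ℂ fun z => M (f z).rep / L (f z).rep := by
  intro z₀
  obtain ⟨W, hW, hz₀, F, hF, hfF⟩ := hf z₀
  have hlift : ∀ z ∈ W, ∃ a : ℂ, a ≠ 0 ∧ F z = a • (f z).rep := fun z hz => by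
    obtain ⟨hFz, hmk⟩ := hfF z hz
    rw [← (f z).mk_rep, eq_comm] at hmk
    obtain ⟨a, ha⟩ := (Projectivization.mk_eq_mk_iff ℂ _ _ _ _).1 hmk
    exact ⟨a, a.ne_zero, ha.symm⟩
  have hdiff (G : (Fin d → ℂ) →ₗ[ℂ] ℂ) : DifferentiableAt ℂ (fun z => G (F z)) z₀ :=
    G.toContinuousLinearMap.differentiableAt.comp z₀ (hF.differentiableAt (hW.mem_nhds hz₀))
  have hLF : L (F z₀) ≠ 0 := by
    obtain ⟨a, ha0, ha⟩ := hlift z₀ hz₀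
    simpa [ha] using ⟨ha0, hL z₀⟩
  refine ((hdiff M).fun_div (hdiff L) hLF).congr_of_eventuallyEq ?_
  filter_upwards [hW.mem_nhds hz₀] with z hz
  obtain ⟨a, ha0, ha⟩ := hlift z hz
  simp [ha, mul_div_mul_left _ _ ha0]

theorem HoloToProj.exists_eq_mul_of_mem_span {ι : Type*} {L : ι → (Fin d → ℂ) →ₗ[ℂ] ℂ}
    {M : (Fin d → ℂ) →ₗ[ℂ] ℂ} {s : Set ι} (hf : HoloToProj f)
    (hL : ∀ i ∈ s, ∀ z, L i (f z).rep ≠ 0) (hM : ∀ z, M (f z).rep ≠ 0)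
    (hspan : M ∈ Submodule.span ℂ (L '' s)) :
    ∃ i ∈ s, ∃ c : ℂ, ∀ z, M (f z).rep = c * L i (f z).rep := by
  let Φ : ((Fin d → ℂ) →ₗ[ℂ] ℂ) →ₗ[ℂ] (ℂ → ℂ) :=
    LinearMap.pi fun z => (M (f z).rep)⁻¹ • LinearMap.applyₗ (f z).rep
  have hΦ (G : (Fin d → ℂ) →ₗ[ℂ] ℂ) (hG : ∀ z, G (f z).rep ≠ 0) : IsEntireUnit (Φ G) :=
    ⟨by simpa [Φ, div_eq_inv_mul] using! hf.differentiable_div G hM,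
      fun z => mul_ne_zero (inv_ne_zero (hM z)) (hG z)⟩
  have hunits : ∀ u ∈ Φ '' (L '' s), IsEntireUnit u := by
    rintro _ ⟨_, ⟨i, hi, rfl⟩, rfl⟩
    exact hΦ _ (hL i hi)
  have hmem : Φ M ∈ Submodule.span ℂ (Φ '' (L '' s)) :=
    Submodule.apply_mem_span_image_of_mem_span Φ hspan
  obtain ⟨_, ⟨_, ⟨i, hi, rfl⟩, rfl⟩, c, hc⟩ :=
    (hΦ M hM).exists_eq_smul_of_mem_span hunits hmem
  exact ⟨i, hi, c, fun z => mul_left_cancel₀ (inv_ne_zero (hM z))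
    ((congrFun hc z).trans (mul_left_comm _ _ _))⟩

variable {ι : Type*} {N : ℕ} {L : ι → (Fin d → ℂ) →ₗ[ℂ] ℂ}

theorem HoloToProj.exists_card_eq_forall_eq_mul [Fintype ι] (hf : HoloToProj f)
    (hcard : 2 * N + 1 ≤ Fintype.card ι) (hL : InSubgeneralPosition N L)
    (havoid : ∀ z i, L i (f z).rep ≠ 0) (i : ι) :
    ∃ s : Finset ι, s.card = N + 1 ∧ ∀ j ∈ s, ∃ c : ℂ, ∀ z, L i (f z).rep = c * L j (f z).rep := by
  classical
  let S := {j | ∃ c : ℂ, ∀ z, L i (f z).rep = c * L j (f z).rep}.toFinset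
  suffices hS : N + 1 ≤ S.card by
    obtain ⟨s, hsS, hs⟩ := Finset.exists_subset_card_eq hS
    exact ⟨s, hs, fun j hj => by simpa [S] using hsS hj⟩
  by_contra! hlt
  obtain ⟨s, hsS, hs⟩ := Finset.exists_subset_card_eq (s := Sᶜ) (n := N + 1)
    (by rw [Finset.card_compl]; omega)
  obtain ⟨j, hj, hprop⟩ := hf.exists_eq_mul_of_mem_span (s := (s : Set ι))
    (fun j _ z => havoid z j) (fun z => havoid z i) (hL.mem_span_image hs (L i))
  exact Finset.mem_compl.1 (hsS hj) (by simpa [S] using hprop)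

end HolomorphicCurves

theorem green_theorem_general {ι : Type*} [Fintype ι] {d N : ℕ}
    (hcard : 2 * N + 1 ≤ Fintype.card ι) (L : ι → (Fin d → ℂ) →ₗ[ℂ] ℂ)
    (hL : InSubgeneralPosition N L) (f : ℂ → Projectivization ℂ (Fin d → ℂ)) (hf : HoloToProj f)
    (havoid : ∀ (z : ℂ) (i : ι), L i (f z).rep ≠ 0) : ∀ z w : ℂ, f z = f w := by
  intro z w
  obtain ⟨i⟩ : Nonempty ι := Fintype.card_pos_iff.1 (by omega)
  obtain ⟨s, hs, hprop⟩ := hf.exists_card_eq_forall_eq_mul hcard hL havoid i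
  refine hL.eq_of_forall_eq_mul hs (havoid z i) (havoid w i) fun j hj => ?_
  obtain ⟨c, hc⟩ := hprop j hj
  exact ⟨c, hc z, hc w⟩

/-- **Green's theorem.** Let `L 0, …, L 4` be the linear forms cutting out five lines in
general position (no triple point) in `P²(ℂ)`.  Then the complement of the five lines is
hyperbolic: every holomorphic map `f : ℂ → P²(ℂ)` avoiding the five lines is constant. -/
theorem green_theorem
    (L : Fin 5 → ((Fin 3 → ℂ) →ₗ[ℂ] ℂ))
    (hL0 : ∀ i, L i ≠ 0)
    (hL_distinct : ∀ i j, i ≠ j → LinearMap.ker (L i) ≠ LinearMap.ker (L j))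
    (hgen : ∀ i j k : Fin 5, i ≠ j → i ≠ k → j ≠ k →
      ∀ v : Fin 3 → ℂ, v ≠ 0 → ¬ (L i v = 0 ∧ L j v = 0 ∧ L k v = 0))
    (f : ℂ → Projectivization ℂ (Fin 3 → ℂ)) (hf : HoloToProj f)
    (havoid : ∀ (z : ℂ) (i : Fin 5), L i (f z).rep ≠ 0) :
    ∀ z w : ℂ, f z = f w := by
  have hL : InSubgeneralPosition 2 L := by
    intro s hs v hv
    obtain ⟨i, j, k, hij, hik, hjk, rfl⟩ := Finset.card_eq_three.1 hs
    by_contra hv0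
    exact hgen i j k hij hik hjk v hv0 ⟨hv i (by simp), hv j (by simp), hv k (by simp)⟩
  exact green_theorem_general (by simp) L hL f hf havoid
end
end

section
/- (A hyperbolic sextic) Let P₁,…,P₆ be six planes in general position in P³(ℂ), with equations p_i = 0, where general position means no four of the planes pass through a common point. Then there exists a sextic surface S = (s = 0), in general position with respect to the planes (i.e. avoiding the triple points of the configuration), such that for all sufficiently small ε ≠ 0 the sextic surface Σ_ε = (p₁p₂p₃p₄p₅p₆ = ε s) is Kobayashi-hyperbolic: it contains no nonconstant holomorphic map from ℂ. -/
/- A hyperbolic sextic in `P³(ℂ)`.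

`P³(ℂ)` is `Projectivization ℂ (Fin 4 → ℂ)`.  The planes `P i` are cut out by nonzero
homogeneous polynomials `p i` of degree 1, in general position (no quadruple point).
A sextic is the zero set of a nonzero homogeneous polynomial of degree 6; it is in
general position with respect to the planes if it avoids the triple points of the
configuration.  The surface `Σ_ε` is cut out by `p 0 ⋯ p 5 - ε s`; membership of a
point of `P³(ℂ)` in it is tested on the representative `(f z).rep` (the defining
equation is homogeneous of degree 6, hence scale invariant).  Holomorphy of maps
`ℂ → P³(ℂ)` is via local nonvanishing holomorphic lifts; hyperbolicity of `Σ_ε` means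
that every holomorphic map from `ℂ` with image in `Σ_ε` is constant. -/

open Metric Filter MvPolynomial
open scoped Topology

noncomputable section

/-!
The points of a sextic `S` lying on the double lines of the arrangement are what a curve in a
plane is allowed to meet when it arises as a limit of entire curves in `Σ_ε`, `ε → 0`: by
Hurwitz's theorem the limit curve can meet the other planes only where `s = 0`. So one needs an
`S` for which every entire curve in one of the planes that meets the other planes only on `S` is
constant.

If no point of `S` is allowed at all, this is the theorem of Bloch and Green. The double lines
are then allowed one at a time, following Duval. For the line `D`, replace `s` by `s + n h`,
where `h` is a product of the planes not containing `D`, which leaves `S` unchanged on the other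
double lines. If this failed for every `n`, Brody's lemma would give a nonconstant limit of
counterexamples, whose intersections with `D` lie on `h = 0`, hence at triple points of the
arrangement. But there the limit also meets a third plane, so it lies on `S`, which avoids the
triple points. Thus the limit misses `D` and is ruled out by the previous stage, or else it lies
in a double line and is constant by Bloch and Green.

For Bloch and Green, take `n`-th roots of the nowhere vanishing coordinates and apply Brody's
lemma as `n → ∞`. The linear relations between the coordinates degenerate to tropical ones, so
that at each point of the limit curve more than half of the coordinates have maximal modulus.
Two majorities intersect, so one coordinate dominates everywhere, and Liouville's theorem
applies.
-/

section LimitsOfHolomorphicFunctions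

variable {ι E : Type*} [NormedAddCommGroup E] {U : Filter ι}

lemma eventually_forall_of_isCompact {K : Set ℂ} (hK : IsCompact K) {P : ι → ℂ → Prop}
    (hP : ∀ z ∈ K, ∀ᶠ y in U ×ˢ 𝓝 z, P y.1 y.2) : ∀ᶠ n in U, ∀ z ∈ K, P n z :=
  (Eventually.curry (hK.mem_prod_nhdsSet_of_forall (s := {y | P y.1 y.2}) hP)).mono
    fun _ hn => hn.self_of_nhdsSet

lemma exists_ball_of_eventually_prod_nhds {z : ℂ} {P : ι → ℂ → Prop}
    (hP : ∀ᶠ y in U ×ˢ 𝓝 z, P y.1 y.2) :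
    ∃ r > 0, ∀ᶠ n in U, ∀ w ∈ ball z r, P n w := by
  obtain ⟨s, hs, t, ht, hst⟩ := mem_prod_iff.1 hP
  obtain ⟨r, hr, hrt⟩ := Metric.mem_nhds_iff.1 ht
  exact ⟨r, hr, mem_of_superset hs fun n hn w hw => hst (Set.mk_mem_prod hn (hrt hw))⟩

lemma tendsto_section_of_tendsto_prod_nhds {F : ι → ℂ → E} {a : E} {z : ℂ}
    (h : Tendsto (fun y : ι × ℂ => F y.1 y.2) (U ×ˢ 𝓝 z) (𝓝 a)) :
    Tendsto (fun n => F n z) U (𝓝 a) :=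
  h.comp (tendsto_id.prodMk tendsto_const_nhds)

lemma tendsto_prod_nhds_of_norm_le [NormedSpace ℂ E] {F : ι → ℂ → E} {a : E} {x : ℂ} {r C : ℝ}
    (hr : 0 < r)
    (hF : ∀ᶠ n in U, DifferentiableOn ℂ (F n) (ball x r) ∧ ∀ z ∈ ball x r, ‖F n z‖ ≤ C)
    (hx : Tendsto (fun n => F n x) U (𝓝 a)) :
    Tendsto (fun y : ι × ℂ => F y.1 y.2) (U ×ˢ 𝓝 x) (𝓝 a) := by
  have lipschitz : ∀ᶠ y : ι × ℂ in U ×ˢ 𝓝 x,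
      dist (F y.1 y.2) (F y.1 x) ≤ (C + C) / r * dist y.2 x := by
    filter_upwards [hF.prod_mk (ball_mem_nhds x hr)] with y ⟨⟨hd, hC⟩, hy⟩
    exact Complex.dist_le_div_mul_dist_of_mapsTo_ball hd
      (fun w hw => dist_le_norm_add_norm _ _ |>.trans
        (add_le_add (hC w hw) (hC x (mem_ball_self hr)))) hy
  have to_zero : Tendsto (fun y : ι × ℂ => (C + C) / r * dist y.2 x) (U ×ˢ 𝓝 x) (𝓝 0) := by
    simpa only [dist_self, mul_zero] using
      ((tendsto_snd (f := U) (g := 𝓝 x)).dist (tendsto_const_nhds (x := x))).const_mul ((C + C) / r)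
  refine Tendsto.congr_dist (f₁ := fun y : ι × ℂ => F y.1 x) (hx.comp tendsto_fst) ?_
  refine squeeze_zero' (.of_forall fun _ => dist_nonneg) ?_ to_zero
  simpa only [dist_comm (F _ x)] using lipschitz

lemma tendstoLocallyUniformlyOn_of_tendsto_prod_nhds [U.NeBot] {F : ι → ℂ → E} {G : ℂ → E}
    {Ω : Set ℂ} (hΩ : IsOpen Ω)
    (h : ∀ z ∈ Ω, Tendsto (fun y : ι × ℂ => F y.1 y.2) (U ×ˢ 𝓝 z) (𝓝 (G z))) :
    TendstoLocallyUniformlyOn F G U Ω := by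
  have pointwise : ∀ z ∈ Ω, Tendsto (fun n => F n z) U (𝓝 (G z)) := fun z hz =>
    tendsto_section_of_tendsto_prod_nhds (h z hz)
  refine (hΩ.tendstoLocallyUniformlyOn_iff_forall_tendsto).2 fun z hz => ?_
  have continuous_limit : Tendsto G (𝓝 z) (𝓝 (G z)) := by
    refine (closed_nhds_basis (G z)).tendsto_right_iff.2 fun V ⟨hV, hVc⟩ => ?_
    filter_upwards [hΩ.mem_nhds hz, (eventually_swap_iff.1 ((h z hz).eventually hV)).curry]
      with w hw hwV
    exact hVc.mem_of_tendsto (pointwise w hw) hwV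
  exact ((continuous_limit.comp tendsto_snd).prodMk_nhds (h z hz)).mono_right
    (nhds_le_uniformity (G z))

lemma le_norm_center_of_le_norm_sphere {A : ℂ → ℂ} {z₀ : ℂ} {t m : ℝ} (ht : 0 < t) (hm : 0 < m)
    (hA : ∀ z ∈ closedBall z₀ t, DifferentiableAt ℂ A z ∧ A z ≠ 0)
    (h : ∀ z ∈ sphere z₀ t, m ≤ ‖A z‖) : m ≤ ‖A z₀‖ := by
  have hinv : DiffContOnCl ℂ A⁻¹ (ball z₀ t) := by
    refine DifferentiableOn.diffContOnCl fun z hz => ?_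
    obtain ⟨hdiff, hne⟩ := hA z (closure_ball_subset_closedBall hz)
    exact (hdiff.inv hne).differentiableWithinAt
  have hmax := Complex.norm_le_of_forall_mem_frontier_norm_le isBounded_ball hinv (C := m⁻¹)
    (fun z hz => by
      rw [frontier_ball z₀ ht.ne'] at hz
      rw [Pi.inv_apply, norm_inv]
      exact inv_anti₀ hm (h z hz)) (subset_closure (mem_ball_self ht))
  rw [Pi.inv_apply, norm_inv] at hmax
  exact (inv_le_inv₀ (norm_pos_iff.2 (hA z₀ (mem_closedBall_self ht.le)).2) hm).1 hmax

/-- Hurwitz's theorem. -/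
lemma frequently_eq_zero_of_tendsto [U.NeBot] {A : ι → ℂ → ℂ} {B : ℂ → ℂ} {z₀ : ℂ}
    (hA : ∀ᶠ y in U ×ˢ 𝓝 z₀, DifferentiableAt ℂ (A y.1) y.2)
    (hAB : ∀ᶠ z in 𝓝 z₀, Tendsto (fun y : ι × ℂ => A y.1 y.2) (U ×ˢ 𝓝 z) (𝓝 (B z)))
    (hB : ∀ᶠ z in 𝓝 z₀, ContinuousAt B z) (hB_ne : ∀ᶠ z in 𝓝[≠] z₀, B z ≠ 0)
    (hB₀ : B z₀ = 0) : ∃ᶠ y in U ×ˢ 𝓝 z₀, A y.1 y.2 = 0 := by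
  intro hA_ne
  obtain ⟨r, hr, hball⟩ := exists_ball_of_eventually_prod_nhds
    (P := fun n z => DifferentiableAt ℂ (A n) z ∧ A n z ≠ 0) (hA.and hA_ne)
  obtain ⟨ρ, hρ, hlim⟩ := Metric.mem_nhds_iff.1
    (inter_mem hAB (inter_mem hB (eventually_nhdsWithin_iff.1 hB_ne)))
  obtain ⟨t, ht, htm⟩ := exists_between (lt_min hr hρ)
  have hsphere : ∀ z ∈ sphere z₀ t, z ∈ ball z₀ ρ := fun z hz =>
    mem_ball.2 ((mem_sphere.1 hz).trans_lt (htm.trans_le (min_le_right r ρ)))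
  have htr : closedBall z₀ t ⊆ ball z₀ r := closedBall_subset_ball (htm.trans_le (min_le_left r ρ))
  obtain ⟨w, hw, hmin⟩ := (isCompact_sphere z₀ t).exists_isMinOn
    (NormedSpace.sphere_nonempty.2 ht.le)
    (fun z hz => (hlim (hsphere z hz)).2.1.norm.continuousWithinAt)
  have hw_pos : 0 < ‖B w‖ := norm_pos_iff.2 ((hlim (hsphere w hw)).2.2 (ne_of_mem_sphere hw ht.ne'))
  have lower_on_sphere : ∀ᶠ n in U, ∀ z ∈ sphere z₀ t, ‖B w‖ / 2 < ‖A n z‖ :=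
    eventually_forall_of_isCompact (isCompact_sphere z₀ t) fun z hz =>
      (hlim (hsphere z hz)).1.norm.eventually
        (lt_mem_nhds ((half_lt_self hw_pos).trans_le (hmin hz)))
  have lower_at_center : ∀ᶠ n in U, ‖B w‖ / 2 ≤ ‖A n z₀‖ := by
    filter_upwards [hball, lower_on_sphere] with n hn hlow
    exact le_norm_center_of_le_norm_sphere ht (half_pos hw_pos) (fun z hz => hn z (htr hz))
      fun z hz => (hlow z hz).le
  have hz₀ : Tendsto (fun n => A n z₀) U (𝓝 (B z₀)) :=
    tendsto_section_of_tendsto_prod_nhds (hlim (mem_ball_self hρ)).1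
  have := ge_of_tendsto hz₀.norm lower_at_center
  rw [hB₀, norm_zero] at this
  linarith

lemma exists_tendsto_of_eventually_norm_le [ProperSpace E] (V : Ultrafilter ι) {x : ι → E} {C : ℝ}
    (h : ∀ᶠ n in V, ‖x n‖ ≤ C) : ∃ a, Tendsto x V (𝓝 a) := by
  obtain ⟨a, -, ha⟩ := (isCompact_closedBall (0 : E) C).ultrafilter_le_nhds (V.map x)
    (le_principal_iff.2 (h.mono fun _ hn => mem_closedBall_zero_iff.2 hn))
  exact ⟨a, ha⟩

end LimitsOfHolomorphicFunctions

section EntireFunctions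

lemma norm_eq_of_eventually_norm_eq {A B : ℂ → ℂ} (hA : Differentiable ℂ A)
    (hB : Differentiable ℂ B) {z₀ : ℂ} (h : ∀ᶠ z in 𝓝 z₀, ‖A z‖ = ‖B z‖) (z : ℂ) :
    ‖A z‖ = ‖B z‖ := by
  have analytic_normSq : ∀ {F : ℂ → ℂ}, Differentiable ℂ F →
      AnalyticOnNhd ℝ (fun z => F z * starRingEnd ℂ (F z)) Set.univ := fun {F} hF z _ => by
    have hFz : AnalyticAt ℝ F z := (hF.analyticAt z).restrictScalars
    exact hFz.mul ((Complex.conjCLE.toContinuousLinearMap.analyticAt (F z)).comp hFz)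
  have hAB := (analytic_normSq hA).eq_of_eventuallyEq (analytic_normSq hB) (z₀ := z₀)
    (h.mono fun w hw => by simp only [Complex.mul_conj', hw])
  have hz := congrFun hAB z
  simp only [Complex.mul_conj'] at hz
  exact (sq_eq_sq₀ (norm_nonneg _) (norm_nonneg _)).1 (by exact_mod_cast hz)

lemma exists_entire_pow_eq {f : ℂ → ℂ} (hf : Differentiable ℂ f) (hf₀ : ∀ z, f z ≠ 0) {n : ℕ}
    (hn : n ≠ 0) : ∃ g : ℂ → ℂ, Differentiable ℂ g ∧ ∀ z, g z ^ n = f z := by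
  have hd : Differentiable ℂ fun z => deriv f z / (n * f z) := fun z =>
    (hf.analyticAt z).deriv.differentiableAt.div ((hf z).const_mul _)
      (mul_ne_zero (Nat.cast_ne_zero.2 hn) (hf₀ z))
  obtain ⟨u, hu⟩ := hd.isExactOn_univ
  have hquot : ∀ z, HasDerivAt (fun z => f z * Complex.exp (-(n * u z))) 0 z := fun z => by
    refine ((hf z).hasDerivAt.mul ((hu z trivial).const_mul (n : ℂ)).neg.cexp).congr_deriv ?_
    field_simp [hf₀ z]
    ring
  have hconst : ∀ z, f z * Complex.exp (-(n * u z)) = f 0 * Complex.exp (-(n * u 0)) := fun z =>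
    is_const_of_deriv_eq_zero (fun z => (hquot z).differentiableAt) (fun z => (hquot z).deriv) z 0
  obtain ⟨c, hc⟩ := IsAlgClosed.exists_pow_nat_eq (f 0 * Complex.exp (-(n * u 0)))
    (Nat.pos_of_ne_zero hn)
  refine ⟨fun z => c * Complex.exp (u z),
    fun z => ((hu z trivial).differentiableAt.cexp).const_mul c, fun z => ?_⟩
  rw [mul_pow, hc, ← hconst z, ← Complex.exp_nat_mul, mul_assoc, ← Complex.exp_add,
    neg_add_cancel, Complex.exp_zero, mul_one]

end EntireFunctions

section HomogeneousPolynomials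

variable {κ : Type*} {d : ℕ} {P : MvPolynomial κ ℂ}

lemma eval_smul_of_isHomogeneous (hP : P.IsHomogeneous d) (c : ℂ) (v : κ → ℂ) :
    eval (c • v) P = c ^ d * eval v P := by
  rw [eval_eq, eval_eq, Finset.mul_sum]
  refine Finset.sum_congr rfl fun m hm => ?_
  simp only [Pi.smul_apply, smul_eq_mul, mul_pow, Finset.prod_mul_distrib,
    Finset.prod_pow_eq_pow_sum]
  rw [show ∑ i ∈ m.support, m i = d from (hP.degree_eq_sum_deg_support hm).symm]
  ring

lemma exists_linearMap_eq_eval (hP : P.IsHomogeneous 1) :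
    ∃ L : (κ → ℂ) →ₗ[ℂ] ℂ, ∀ v, eval v P = L v := by
  rw [← mem_homogeneousSubmodule, homogeneousSubmodule_one_eq_span_X] at hP
  induction hP using Submodule.span_induction with
  | mem P hP =>
    obtain ⟨i, rfl⟩ := hP
    exact ⟨LinearMap.proj i, fun v => eval_X i⟩
  | zero => exact ⟨0, fun v => map_zero _⟩
  | add P Q _ _ hP hQ =>
    obtain ⟨L, hL⟩ := hP
    obtain ⟨M, hM⟩ := hQ
    exact ⟨L + M, fun v => by rw [map_add, hL, hM, LinearMap.add_apply]⟩
  | smul c P _ hP =>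
    obtain ⟨L, hL⟩ := hP
    exact ⟨c • L, fun v => by rw [smul_eval, hL, LinearMap.smul_apply, smul_eq_mul]⟩

end HomogeneousPolynomials

section ProjectiveCurves

variable {κ : Type*}

/-- A curve in projective space is encoded by a choice `f : ℂ → κ → ℂ` of homogeneous coordinates,
not necessarily continuous. `chart f i` is the curve in the affine chart where the `i`-th coordinate
is `1`; it takes the junk value `0` at the points where `f` leaves this chart. -/
def chart (f : ℂ → κ → ℂ) (i : κ) (w : ℂ) : κ → ℂ := (f w i)⁻¹ • f w

/-- Homogeneous coordinates of an entire curve in projective space: they never all vanish, and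
the curve is holomorphic in every affine chart. -/
structure IsEntireCurve [Fintype κ] (f : ℂ → κ → ℂ) : Prop where
  ne_zero : ∀ z, f z ≠ 0
  analyticAt_chart : ∀ {z i}, f z i ≠ 0 → AnalyticAt ℂ (chart f i) z

/-- The curve with homogeneous coordinates `f` is constant, expressed by the vanishing of all
`2 × 2` minors. -/
def IsProjConst (f : ℂ → κ → ℂ) : Prop := ∀ z w i j, f z i * f w j = f z j * f w i

/-- Locally uniform convergence of projective curves, expressed as continuous convergence in the
affine charts of the limit. -/
def TendstoProj {ι : Type*} (U : Filter ι) (f : ι → ℂ → κ → ℂ) (g : ℂ → κ → ℂ) : Prop :=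
  ∀ z i, g z i ≠ 0 → Tendsto (fun y : ι × ℂ => chart (f y.1) i y.2) (U ×ˢ 𝓝 z) (𝓝 (chart g i z))

lemma chart_apply (f : ℂ → κ → ℂ) (i j : κ) (w : ℂ) : chart f i w j = (f w i)⁻¹ * f w j := rfl

lemma chart_self {f : ℂ → κ → ℂ} {i : κ} {w : ℂ} (h : f w i ≠ 0) : chart f i w i = 1 :=
  inv_mul_cancel₀ h

lemma coord_ne_zero_of_chart {f : ℂ → κ → ℂ} {i j : κ} {w : ℂ} (h : chart f i w j ≠ 0) :
    f w i ≠ 0 :=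
  fun h₀ => left_ne_zero_of_mul h (inv_eq_zero.2 h₀)

lemma eval_chart {d : ℕ} {P : MvPolynomial κ ℂ} (hP : P.IsHomogeneous d) (f : ℂ → κ → ℂ) (i : κ)
    (w : ℂ) : eval (chart f i w) P = (f w i)⁻¹ ^ d * eval (f w) P :=
  eval_smul_of_isHomogeneous hP _ _

lemma eval_chart_eq_zero_iff {d : ℕ} {P : MvPolynomial κ ℂ} (hP : P.IsHomogeneous d)
    {f : ℂ → κ → ℂ} {i : κ} {w : ℂ} (h : f w i ≠ 0) :
    eval (chart f i w) P = 0 ↔ eval (f w) P = 0 := by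
  rw [eval_chart hP, mul_eq_zero, or_iff_right (pow_ne_zero d (inv_ne_zero h))]

section Convergence

variable {ι : Type*} {U : Filter ι} {f : ι → ℂ → κ → ℂ} {g : ℂ → κ → ℂ} {z : ℂ} {i : κ}

lemma TendstoProj.eventually_coord_ne_zero (h : TendstoProj U f g) (hi : g z i ≠ 0) :
    ∀ᶠ y in U ×ˢ 𝓝 z, f y.1 y.2 i ≠ 0 := by
  have hlim := tendsto_pi_nhds.1 (h z i hi) i
  rw [chart_self hi] at hlim
  exact (hlim.eventually_ne one_ne_zero).mono fun _ => coord_ne_zero_of_chart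

lemma TendstoProj.tendsto_eval_chart (h : TendstoProj U f g) (hi : g z i ≠ 0)
    (P : MvPolynomial κ ℂ) : Tendsto (fun y : ι × ℂ => eval (chart (f y.1) i y.2) P) (U ×ˢ 𝓝 z)
      (𝓝 (eval (chart g i z) P)) :=
  ((MvPolynomial.continuous_eval P).tendsto _).comp (h z i hi)

end Convergence

variable [Fintype κ]

lemma isEntireCurve_of_local_lift {f : ℂ → κ → ℂ}
    (h : ∀ z, ∃ F : ℂ → κ → ℂ, AnalyticAt ℂ F z ∧ F z ≠ 0 ∧
      ∀ᶠ w in 𝓝 z, ∃ c : ℂ, c ≠ 0 ∧ f w = c • F w) : IsEntireCurve f where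
  ne_zero z := by
    obtain ⟨F, -, hFz, hfF⟩ := h z
    obtain ⟨c, hc, hfz⟩ := hfF.self_of_nhds
    exact hfz ▸ smul_ne_zero hc hFz
  analyticAt_chart {z i} hi := by
    obtain ⟨F, hF, -, hfF⟩ := h z
    obtain ⟨c, hc, hfz⟩ := hfF.self_of_nhds
    have hFi : F z i ≠ 0 := by
      rw [hfz, Pi.smul_apply, smul_eq_mul] at hi
      exact right_ne_zero_of_mul hi
    refine (((analyticAt_pi_iff.1 hF i).inv hFi).smul hF).congr ?_
    filter_upwards [hfF] with w ⟨c, hc, hfw⟩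
    ext j
    simp only [chart_apply, hfw, Pi.smul_apply, Pi.smul_apply', Pi.inv_apply, smul_eq_mul, mul_inv]
    field_simp

lemma isEntireCurve_of_differentiable {f : ℂ → κ → ℂ} (hf : Differentiable ℂ f)
    (hf₀ : ∀ z, f z ≠ 0) : IsEntireCurve f :=
  isEntireCurve_of_local_lift fun z =>
    ⟨f, hf.analyticAt z, hf₀ z, .of_forall fun w => ⟨1, one_ne_zero, (one_smul ℂ (f w)).symm⟩⟩

namespace IsEntireCurve

variable {f g : ℂ → κ → ℂ} {z : ℂ} {i : κ} {d : ℕ} {P : MvPolynomial κ ℂ}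

lemma exists_coord_ne_zero (hf : IsEntireCurve f) (z : ℂ) : ∃ i, f z i ≠ 0 :=
  Function.ne_iff.1 (hf.ne_zero z)

lemma eventually_coord_ne_zero (hf : IsEntireCurve f) (hi : f z i ≠ 0) :
    ∀ᶠ w in 𝓝 z, f w i ≠ 0 := by
  have hcont : ContinuousAt (fun w => chart f i w i) z :=
    (analyticAt_pi_iff.1 (hf.analyticAt_chart hi) i).continuousAt
  refine (hcont.eventually_ne (y := 0) ?_).mono fun w => coord_ne_zero_of_chart
  rw [chart_self hi]
  exact one_ne_zero

lemma analyticAt_eval_chart (hf : IsEntireCurve f) (hi : f z i ≠ 0) (P : MvPolynomial κ ℂ) :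
    AnalyticAt ℂ (fun w => eval (chart f i w) P) z :=
  (AnalyticOnNhd.eval_mvPolynomial P _ trivial).comp (hf.analyticAt_chart hi)

lemma comp_affine (hf : IsEntireCurve f) (a b : ℂ) : IsEntireCurve fun z => f (a + b * z) where
  ne_zero z := hf.ne_zero _
  analyticAt_chart {z i} hi := by
    have haffine : AnalyticAt ℂ (fun z => a + b * z) z := by fun_prop
    exact AnalyticAt.fun_comp (g := chart f i) (hf.analyticAt_chart hi) haffine

lemma eval_eventually_eq_zero_or (hf : IsEntireCurve f) (hP : P.IsHomogeneous d) (z : ℂ) :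
    (∀ᶠ w in 𝓝 z, eval (f w) P = 0) ∨ ∀ᶠ w in 𝓝[≠] z, eval (f w) P ≠ 0 := by
  obtain ⟨i, hi⟩ := hf.exists_coord_ne_zero z
  have hne := hf.eventually_coord_ne_zero hi
  refine (hf.analyticAt_eval_chart hi P).eventually_eq_zero_or_eventually_ne_zero.imp ?_ ?_
  · intro h
    filter_upwards [h, hne] with w hw hwi using (eval_chart_eq_zero_iff hP hwi).1 hw
  · intro h
    filter_upwards [h, hne.filter_mono nhdsWithin_le_nhds] with w hw hwi
      using (eval_chart_eq_zero_iff hP hwi).not.1 hw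

lemma eval_eq_zero_or_eventually_ne_zero (hf : IsEntireCurve f) (hP : P.IsHomogeneous d) :
    (∀ z, eval (f z) P = 0) ∨ ∀ z, ∀ᶠ w in 𝓝[≠] z, eval (f w) P ≠ 0 := by
  set S : Set ℂ := {z | ∀ᶠ w in 𝓝 z, eval (f w) P = 0}
  have hopen : IsOpen S := isOpen_setOfPred_eventually_nhds
  have hclosed : IsClosed S := by
    refine isOpen_compl_iff.1 (isOpen_iff_mem_nhds.2 fun z hz => ?_)
    have hne := (hf.eval_eventually_eq_zero_or hP z).resolve_left hz
    filter_upwards [eventually_nhdsWithin_iff.1 hne] with w hw hwS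
    obtain rfl | hwz := eq_or_ne w z
    exacts [hz hwS, hw hwz hwS.self_of_nhds]
  obtain hS | hS := isClopen_iff.1 ⟨hclosed, hopen⟩
  · exact .inr fun z => (hf.eval_eventually_eq_zero_or hP z).resolve_left
      fun hz => Set.notMem_empty z (hS ▸ hz)
  · exact .inl fun z => (hS ▸ Set.mem_univ z : z ∈ S).self_of_nhds

end IsEntireCurve

namespace TendstoProj

variable {ι : Type*} {U : Filter ι} {f : ι → ℂ → κ → ℂ} {g : ℂ → κ → ℂ} {z : ℂ} {i : κ}
  {d : ℕ} {P Q : MvPolynomial κ ℂ}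

/-- Hurwitz's theorem for the intersections of a curve with a hypersurface. -/
lemma frequently_eval_eq_zero [U.NeBot] (h : TendstoProj U f g) (hf : ∀ n, IsEntireCurve (f n))
    (hg : IsEntireCurve g) (hP : P.IsHomogeneous d) (hg_ne : ¬ ∀ w, eval (g w) P = 0)
    (hz : eval (g z) P = 0) : ∃ᶠ y in U ×ˢ 𝓝 z, eval (f y.1 y.2) P = 0 := by
  obtain ⟨i, hi⟩ := hg.exists_coord_ne_zero z
  have hgi := hg.eventually_coord_ne_zero hi
  have hne : ∀ᶠ w in 𝓝[≠] z, eval (chart g i w) P ≠ 0 := by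
    filter_upwards [(hg.eval_eq_zero_or_eventually_ne_zero hP).resolve_left hg_ne z,
      hgi.filter_mono nhdsWithin_le_nhds] with w hw hwi
    exact (eval_chart_eq_zero_iff hP hwi).not.2 hw
  have hzero := frequently_eq_zero_of_tendsto (A := fun n w => eval (chart (f n) i w) P)
    ((h.eventually_coord_ne_zero hi).mono fun y hy =>
      ((hf y.1).analyticAt_eval_chart hy P).differentiableAt)
    (hgi.mono fun w hw => h.tendsto_eval_chart hw P)
    (hgi.mono fun w hw => (hg.analyticAt_eval_chart hw P).continuousAt)
    hne ((eval_chart_eq_zero_iff hP hi).2 hz)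
  exact (hzero.and_eventually (h.eventually_coord_ne_zero hi)).mono fun y hy =>
    (eval_chart_eq_zero_iff hP hy.2).1 hy.1

lemma eval_eq_zero_of_frequently (h : TendstoProj U f g) (hg : IsEntireCurve g)
    (hP : P.IsHomogeneous d) (hQ : Q.IsHomogeneous d) {a : ι → ℂ} (ha : Tendsto a U (𝓝 0))
    (hfr : ∃ᶠ y in U ×ˢ 𝓝 z, eval (f y.1 y.2) P = a y.1 * eval (f y.1 y.2) Q) :
    eval (g z) P = 0 := by
  obtain ⟨i, hi⟩ := hg.exists_coord_ne_zero z
  have hlim := (h.tendsto_eval_chart hi P).sub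
    ((ha.comp tendsto_fst).mul (h.tendsto_eval_chart hi Q))
  rw [zero_mul, sub_zero] at hlim
  refine (eval_chart_eq_zero_iff hP hi).1
    (isClosed_singleton.mem_of_frequently_of_tendsto (hfr.mono fun y hy => ?_) hlim)
  rw [Set.mem_singleton_iff, Function.comp_apply, eval_chart hP, eval_chart hQ, hy]
  ring

end TendstoProj

end ProjectiveCurves

section Brody

variable {κ : Type*}

lemma chart_chart {f : ℂ → κ → ℂ} {i : κ} {w : ℂ} (hi : f w i ≠ 0) (j : κ) :
    chart f j w = (chart f i w j)⁻¹ • chart f i w := by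
  ext l
  simp only [chart_apply, Pi.smul_apply, smul_eq_mul, mul_inv, inv_inv]
  field_simp

lemma chart_limit_eq {ι : Type*} {U : Filter ι} [U.NeBot] {f : ι → ℂ → κ → ℂ} {w : ℂ} {i j : κ}
    {u v : κ → ℂ} (hi : ∀ᶠ n in U, f n w i ≠ 0) (hj : ∀ᶠ n in U, f n w j ≠ 0)
    (hu : Tendsto (fun n => chart (f n) i w) U (𝓝 u))
    (hv : Tendsto (fun n => chart (f n) j w) U (𝓝 v)) : u j ≠ 0 ∧ v = (u j)⁻¹ • u := by
  have huj := tendsto_pi_nhds.1 hu j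
  have hmul : u j * v i = 1 := by
    refine tendsto_nhds_unique (huj.mul (tendsto_pi_nhds.1 hv i))
      (tendsto_const_nhds.congr' ?_)
    filter_upwards [hi, hj] with n hni hnj
    simp only [chart_apply]
    field_simp
  have hne : u j ≠ 0 := left_ne_zero_of_mul_eq_one hmul
  refine ⟨hne, tendsto_nhds_unique hv (((huj.inv₀ hne).smul hu).congr' ?_)⟩
  filter_upwards [hi] with n hni using (chart_chart hni j).symm

variable [Fintype κ]

/-- On `s`, the `i`-th coordinate is comparable to the largest one, for some fixed `i`: the curve
stays in a fixed compact part of one affine chart. -/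
def StaysInChart (f : ℂ → κ → ℂ) (s : Set ℂ) : Prop := ∃ i, ∀ w ∈ s, ‖f w‖ ≤ 2 * ‖f w i‖

/-- The largest radius of a disc around `z` on which the curve stays in a chart. Its inverse plays
the role of the Fubini–Study norm of the derivative in Brody's reparametrisation lemma. -/
def chartRadius (f : ℂ → κ → ℂ) (z : ℂ) : ℝ := sSup {r | StaysInChart f (ball z r)}

lemma coord_ne_zero_of_norm_le {v : κ → ℂ} {i : κ} {C : ℝ} (hv : v ≠ 0)
    (h : ‖v‖ ≤ C * ‖v i‖) : v i ≠ 0 := fun hi =>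
  hv (norm_le_zero_iff.1 (h.trans_eq (by rw [hi, norm_zero, mul_zero])))

lemma norm_chart (f : ℂ → κ → ℂ) (i : κ) (w : ℂ) : ‖chart f i w‖ = ‖f w i‖⁻¹ * ‖f w‖ := by
  rw [chart, norm_smul, norm_inv]

lemma norm_chart_le {f : ℂ → κ → ℂ} {i : κ} {w : ℂ} {C : ℝ} (hw : f w ≠ 0)
    (h : ‖f w‖ ≤ C * ‖f w i‖) : ‖chart f i w‖ ≤ C := by
  rwa [norm_chart, inv_mul_le_iff₀ (norm_pos_iff.2 (coord_ne_zero_of_norm_le hw h)), mul_comm]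

lemma exists_norm_le_coord {v : κ → ℂ} (hv : v ≠ 0) : ∃ i, ‖v‖ ≤ ‖v i‖ := by
  have : Nonempty κ := (Function.ne_iff.1 hv).nonempty
  obtain ⟨i, hi⟩ := Finite.exists_max fun j => ‖v j‖
  exact ⟨i, (pi_norm_le_iff_of_nonneg (norm_nonneg _)).2 hi⟩

lemma StaysInChart.mono {f : ℂ → κ → ℂ} {s t : Set ℂ} (h : StaysInChart f t) (hst : s ⊆ t) :
    StaysInChart f s :=
  h.imp fun _ hi w hw => hi w (hst hw)

lemma staysInChart_comp_iff {f : ℂ → κ → ℂ} {φ : ℂ → ℂ} {s : Set ℂ} :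
    StaysInChart (fun z => f (φ z)) s ↔ StaysInChart f (φ '' s) := by
  simp only [StaysInChart, Set.forall_mem_image]

lemma StaysInChart.isProjConst {f : ℂ → κ → ℂ} (hf : IsEntireCurve f)
    (h : StaysInChart f Set.univ) : IsProjConst f := by
  obtain ⟨i, hi⟩ := h
  have hne : ∀ w, f w i ≠ 0 := fun w => coord_ne_zero_of_norm_le (hf.ne_zero w) (hi w trivial)
  have hbdd : Bornology.IsBounded (Set.range (chart f i)) :=
    isBounded_iff_forall_norm_le.2 ⟨2, Set.forall_mem_range.2 fun w =>
      norm_chart_le (hf.ne_zero w) (hi w trivial)⟩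
  have hconst := Differentiable.apply_eq_apply_of_bounded
    (fun z => (hf.analyticAt_chart (hne z)).differentiableAt) hbdd
  intro z w a b
  have scaled : ∀ j, f z j * f w i = f w j * f z i := fun j => by
    have hj := congrFun (hconst z w) j
    simp only [chart_apply] at hj
    field_simp [hne z, hne w] at hj
    linear_combination hj
  refine mul_right_cancel₀ (mul_ne_zero (hne z) (hne w)) ?_
  linear_combination f w b * f z i * scaled a - f w a * f z i * scaled b

lemma IsProjConst.norm_le_coord {f : ℂ → κ → ℂ} (h : IsProjConst f) {z w : ℂ} {i : κ}
    (hw : f w ≠ 0) (hi : ‖f w‖ ≤ ‖f w i‖) : ‖f z‖ ≤ ‖f z i‖ := by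
  have hpos : 0 < ‖f w i‖ := (norm_pos_iff.2 hw).trans_le hi
  refine (pi_norm_le_iff_of_nonneg (norm_nonneg _)).2 fun j => le_of_mul_le_mul_right ?_ hpos
  calc ‖f z j‖ * ‖f w i‖ = ‖f z i‖ * ‖f w j‖ := by rw [← norm_mul, h, norm_mul]
    _ ≤ ‖f z i‖ * ‖f w i‖ := by gcongr; exact (norm_le_pi_norm _ j).trans hi

lemma TendstoProj.eventually_norm_le {ι : Type*} {U : Filter ι} {f : ι → ℂ → κ → ℂ}
    {g : ℂ → κ → ℂ} (h : TendstoProj U f g) {z : ℂ} {i : κ} (hz : g z ≠ 0)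
    (hi : ‖g z‖ ≤ ‖g z i‖) : ∀ᶠ y in U ×ˢ 𝓝 z, ‖f y.1 y.2‖ ≤ 2 * ‖f y.1 y.2 i‖ := by
  have hne : g z i ≠ 0 := coord_ne_zero_of_norm_le hz (by rwa [one_mul])
  have hlt : ‖chart g i z‖ < 2 :=
    (norm_chart_le hz (by rwa [one_mul])).trans_lt one_lt_two
  filter_upwards [(h z i hne).norm.eventually_lt_const hlt, h.eventually_coord_ne_zero hne]
    with y hy hyi
  rw [norm_chart, inv_mul_lt_iff₀ (norm_pos_iff.2 hyi), mul_comm] at hy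
  exact hy.le

lemma IsEntireCurve.tendstoProj_const {ι : Type*} (U : Filter ι) {f : ℂ → κ → ℂ}
    (hf : IsEntireCurve f) : TendstoProj U (fun _ => f) f := fun _ _ hi =>
  (hf.analyticAt_chart hi).continuousAt.tendsto.comp tendsto_snd

section ChartRadius

variable {f : ℂ → κ → ℂ}

lemma exists_staysInChart_ball (hf : IsEntireCurve f) (z : ℂ) :
    ∃ r > 0, StaysInChart f (ball z r) := by
  obtain ⟨i, hi⟩ := exists_norm_le_coord (hf.ne_zero z)
  obtain ⟨r, hr, hball⟩ := exists_ball_of_eventually_prod_nhds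
    (P := fun _ w => ‖f w‖ ≤ 2 * ‖f w i‖)
    ((hf.tendstoProj_const (pure ())).eventually_norm_le (hf.ne_zero z) hi)
  exact ⟨r, hr, i, hball⟩

lemma bddAbove_staysInChart (hf : IsEntireCurve f) (hnc : ¬ IsProjConst f) (z : ℂ) :
    BddAbove {r | StaysInChart f (ball z r)} := by
  by_contra hunbdd
  refine hnc (StaysInChart.isProjConst hf ?_)
  by_contra! hleaves
  simp only [StaysInChart, Set.mem_univ, forall_const, not_exists, not_forall, not_le] at hleaves
  choose w hw using hleaves
  obtain ⟨B, hB⟩ := (Set.finite_range fun i => dist (w i) z).bddAbove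
  obtain ⟨r, ⟨i, hi⟩, hBr⟩ := not_bddAbove_iff.1 hunbdd B
  exact (hw i).not_ge (hi (w i) (mem_ball.2 ((hB ⟨i, rfl⟩).trans_lt hBr)))

lemma chartRadius_pos (hf : IsEntireCurve f) (hnc : ¬ IsProjConst f) (z : ℂ) :
    0 < chartRadius f z := by
  obtain ⟨r, hr, hstay⟩ := exists_staysInChart_ball hf z
  exact hr.trans_le (le_csSup (bddAbove_staysInChart hf hnc z) hstay)

lemma staysInChart_of_lt_chartRadius (hf : IsEntireCurve f) {z : ℂ} {r : ℝ}
    (hr : r < chartRadius f z) : StaysInChart f (ball z r) := by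
  obtain ⟨r₀, -, hr₀⟩ := exists_staysInChart_ball hf z
  obtain ⟨r', hr', hlt⟩ := exists_lt_of_lt_csSup ⟨r₀, hr₀⟩ hr
  exact hr'.mono (ball_subset_ball hlt.le)

lemma continuous_chartRadius (hf : IsEntireCurve f) (hnc : ¬ IsProjConst f) :
    Continuous (chartRadius f) := by
  refine (LipschitzWith.of_le_add fun z w => le_of_forall_lt fun r hr => ?_).continuous
  obtain ⟨r', hrr', hr'⟩ := exists_between hr
  have hle : r' - dist z w ≤ chartRadius f w :=
    le_csSup (bddAbove_staysInChart hf hnc w)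
      ((staysInChart_of_lt_chartRadius hf hr').mono (ball_subset_ball' (by
        rw [dist_comm w z, sub_add_cancel])))
  linarith

lemma exists_forall_chartRadius_ge (hf : IsEntireCurve f) (hnc : ¬ IsProjConst f) (n : ℕ) :
    ∃ w, ∀ z, dist w z ≤ n * chartRadius f w → chartRadius f w ≤ 2 * chartRadius f z := by
  have hpos := chartRadius_pos hf hnc
  obtain ⟨ε, -, w, -, -, hε, hw⟩ := hofer (ϕ := (chartRadius f)⁻¹) 0 ((n + 1) * chartRadius f 0)
    (mul_pos n.cast_add_one_pos (hpos 0))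
    ((continuous_chartRadius hf hnc).inv₀ fun z => (hpos z).ne') fun z => (inv_pos.2 (hpos z)).le
  simp only [Pi.inv_apply] at hε hw
  rw [mul_inv_cancel_right₀ (hpos 0).ne', le_mul_inv_iff₀ (hpos w)] at hε
  refine ⟨w, fun z hz => ?_⟩
  have hle := hw z (hz.trans (le_trans (by have := (hpos w).le; gcongr; linarith) hε))
  rw [← div_eq_mul_inv, le_div_iff₀ (hpos w), inv_mul_le_iff₀ (hpos z), mul_comm] at hle
  exact hle

end ChartRadius

section Compactness

variable {ι : Type*} {V : Ultrafilter ι} {f : ι → ℂ → κ → ℂ}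

lemma exists_tendsto_chart_on_ball (hf : ∀ n, IsEntireCurve (f n)) {z : ℂ} {r : ℝ} {i : κ}
    (hi : ∀ᶠ n in V, ∀ w ∈ ball z r, ‖f n w‖ ≤ 2 * ‖f n w i‖) :
    ∃ G : ℂ → κ → ℂ, DifferentiableOn ℂ G (ball z r) ∧ ∀ w ∈ ball z r,
      Tendsto (fun y : ι × ℂ => chart (f y.1) i y.2) (V ×ˢ 𝓝 w) (𝓝 (G w)) := by
  have hchart : ∀ᶠ n in V, DifferentiableOn ℂ (chart (f n) i) (ball z r) ∧
      ∀ w ∈ ball z r, ‖chart (f n) i w‖ ≤ 2 := by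
    filter_upwards [hi] with n hn
    have hne : ∀ w ∈ ball z r, f n w i ≠ 0 := fun w hw =>
      coord_ne_zero_of_norm_le ((hf n).ne_zero w) (hn w hw)
    exact ⟨fun w hw => ((hf n).analyticAt_chart (hne w hw)).differentiableWithinAt,
      fun w hw => norm_chart_le ((hf n).ne_zero w) (hn w hw)⟩
  have hlim : ∀ w ∈ ball z r, ∃ a, Tendsto (fun n => chart (f n) i w) V (𝓝 a) := fun w hw =>
    exists_tendsto_of_eventually_norm_le V (hchart.mono fun n hn => hn.2 w hw)
  choose! G hG using hlim
  have hjoint : ∀ w ∈ ball z r,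
      Tendsto (fun y : ι × ℂ => chart (f y.1) i y.2) (V ×ˢ 𝓝 w) (𝓝 (G w)) := fun w hw => by
    obtain ⟨r', hr', hsub⟩ := Metric.isOpen_iff.1 isOpen_ball w hw
    exact tendsto_prod_nhds_of_norm_le hr' (hchart.mono fun n hn =>
      ⟨hn.1.mono hsub, fun x hx => hn.2 x (hsub hx)⟩) (hG w hw)
  exact ⟨G, (tendstoLocallyUniformlyOn_of_tendsto_prod_nhds isOpen_ball hjoint).differentiableOn
    (hchart.mono fun n hn => hn.1) isOpen_ball, hjoint⟩

/-- Montel's theorem: the limits in the charts dominating `f n` near each point glue together. -/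
lemma exists_tendstoProj (hf : ∀ n, IsEntireCurve (f n))
    (h : ∀ z, ∃ r > 0, ∀ᶠ n in V, StaysInChart (f n) (ball z r)) :
    ∃ g, IsEntireCurve g ∧ TendstoProj V f g := by
  choose r hr hstay using h
  have hdom : ∀ z, ∃ i, ∀ᶠ n in V, ∀ w ∈ ball z (r z), ‖f n w‖ ≤ 2 * ‖f n w i‖ := fun z =>
    Ultrafilter.eventually_exists_iff.1 (hstay z)
  choose i hi using hdom
  choose G hGd hG using fun z => exists_tendsto_chart_on_ball hf (hi z)
  have hne : ∀ z, ∀ w ∈ ball z (r z), ∀ᶠ n in V, f n w (i z) ≠ 0 := fun z w hw =>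
    (hi z).mono fun n hn => coord_ne_zero_of_norm_le ((hf n).ne_zero w) (hn w hw)
  have hpt : ∀ z, ∀ w ∈ ball z (r z), Tendsto (fun n => chart (f n) (i z) w) V (𝓝 (G z w)) :=
    fun z w hw => tendsto_section_of_tendsto_prod_nhds (hG z w hw)
  have hglue : ∀ z, ∀ w ∈ ball z (r z),
      G z w (i w) ≠ 0 ∧ G w w = (G z w (i w))⁻¹ • G z w := fun z w hw =>
    chart_limit_eq (hne z w hw) (hne w w (mem_ball_self (hr w))) (hpt z w hw)
      (hpt w w (mem_ball_self (hr w)))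
  refine ⟨fun z => G z z, isEntireCurve_of_local_lift fun z => ⟨G z, ?_, ?_, ?_⟩, fun z j hj => ?_⟩
  · exact (hGd z).analyticAt (ball_mem_nhds z (hr z))
  · exact fun h₀ => (hglue z z (mem_ball_self (hr z))).1 (congrFun h₀ _)
  · filter_upwards [ball_mem_nhds z (hr z)] with w hw
    exact ⟨_, inv_ne_zero (hglue z w hw).1, (hglue z w hw).2⟩
  · have hlim := hG z z (mem_ball_self (hr z))
    refine (((tendsto_pi_nhds.1 hlim j).inv₀ hj).smul hlim).congr' ?_
    filter_upwards [(hi z).prod_mk (ball_mem_nhds z (hr z))] with y ⟨hy, hyz⟩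
    exact (chart_chart (coord_ne_zero_of_norm_le ((hf y.1).ne_zero y.2) (hy y.2 hyz)) j).symm

lemma eventually_staysInChart_of_isProjConst {U : Filter ι} {g : ℂ → κ → ℂ}
    (hg : IsEntireCurve g) (hconst : IsProjConst g) (h : TendstoProj U f g) {K : Set ℂ}
    (hK : IsCompact K) : ∀ᶠ n in U, StaysInChart (f n) K := by
  obtain ⟨i, hi⟩ := exists_norm_le_coord (hg.ne_zero 0)
  exact (eventually_forall_of_isCompact (P := fun n w => ‖f n w‖ ≤ 2 * ‖f n w i‖) hK fun z _ =>
    h.eventually_norm_le (hg.ne_zero z) (hconst.norm_le_coord (hg.ne_zero 0) hi)).mono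
      fun _ hn => ⟨i, hn⟩

end Compactness

lemma image_affine_ball (a z : ℂ) {r : ℝ} (hr : 0 < r) (ρ : ℝ) :
    (fun w => a + r * w) '' ball z ρ = ball (a + r * z) (r * ρ) := by
  have hr₀ : (r : ℂ) ≠ 0 := Complex.ofReal_ne_zero.2 hr.ne'
  have hsmul := smul_ball hr₀ z ρ
  rw [Complex.norm_real, Real.norm_of_nonneg hr.le, smul_eq_mul] at hsmul
  rw [← vadd_eq_add, ← vadd_ball, ← hsmul, ← Set.image_smul, ← Set.image_vadd, Set.image_image]
  rfl

/-- Brody's reparametrisation lemma. -/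
theorem exists_reparametrization_tendstoProj {f : ℕ → ℂ → κ → ℂ} (hf : ∀ n, IsEntireCurve (f n))
    (hnc : ∀ n, ¬ IsProjConst (f n)) : ∃ a b : ℕ → ℂ, ∃ g, IsEntireCurve g ∧ ¬ IsProjConst g ∧
      TendstoProj (hyperfilter ℕ) (fun n z => f n (a n + b n * z)) g := by
  choose a ha using fun n => exists_forall_chartRadius_ge (hf n) (hnc n) n
  set r : ℕ → ℝ := fun n => chartRadius (f n) (a n)
  have hr : ∀ n, 0 < r n := fun n => chartRadius_pos (hf n) (hnc n) (a n)
  have staysInChart_rescaled : ∀ {n s}, StaysInChart (fun z => f n (a n + r n * z)) s ↔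
      StaysInChart (f n) ((fun z => a n + r n * z) '' s) := staysInChart_comp_iff
  have hstay : ∀ z, ∃ ρ > 0, ∀ᶠ n in hyperfilter ℕ,
      StaysInChart (fun z => f n (a n + r n * z)) (ball z ρ) := fun z => by
    have hlarge : ∀ᶠ n : ℕ in hyperfilter ℕ, ‖z‖ ≤ n :=
      (tendsto_natCast_atTop_atTop.eventually_ge_atTop ‖z‖).filter_mono Nat.hyperfilter_le_atTop
    refine ⟨1 / 4, by norm_num, hlarge.mono fun n hn => ?_⟩
    rw [staysInChart_rescaled, image_affine_ball _ _ (hr n)]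
    have hdist : dist (a n) (a n + r n * z) ≤ n * r n := by
      rw [dist_self_add_right, norm_mul, Complex.norm_real, Real.norm_of_nonneg (hr n).le, mul_comm]
      exact mul_le_mul_of_nonneg_right hn (hr n).le
    exact staysInChart_of_lt_chartRadius (hf n) (by linarith [ha n _ hdist, hr n])
  obtain ⟨g, hg, hlim⟩ := exists_tendstoProj (fun n => (hf n).comp_affine (a n) (r n)) hstay
  refine ⟨a, fun n => r n, g, hg, fun hconst => ?_, hlim⟩
  obtain ⟨n, hn⟩ := (eventually_staysInChart_of_isProjConst hg hconst hlim
    (isCompact_closedBall 0 2)).exists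
  have hball := staysInChart_rescaled.1 (hn.mono ball_subset_closedBall)
  rw [image_affine_ball _ _ (hr n), mul_zero, add_zero] at hball
  have hle : r n * 2 ≤ r n := le_csSup (bddAbove_staysInChart (hf n) (hnc n) (a n)) hball
  linarith [hr n]

end Brody

section BlochGreen

lemma exists_norm_le_of_majority {κ : Type*} [Fintype κ] {G : κ → ℂ → ℂ}
    (hG : ∀ j, Differentiable ℂ (G j))
    (hmaj : ∀ z, Fintype.card κ < 2 * {i | ∀ j, ‖G j z‖ ≤ ‖G i z‖}.toFinset.card) :
    ∃ i, ∀ z j, ‖G j z‖ ≤ ‖G i z‖ := by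
  classical
  obtain ⟨⟨s, hs⟩, z₀, hz₀⟩ := nonempty_interior_of_iUnion_of_closed
    (f := fun s : {s : Finset κ // Fintype.card κ < 2 * s.card} =>
      {z | ∀ i ∈ s.1, ∀ j, ‖G j z‖ ≤ ‖G i z‖})
    (fun s => by
      simp only [Set.ofPred_forall]
      exact isClosed_biInter fun i _ => isClosed_iInter fun j =>
        isClosed_le (hG j).continuous.norm (hG i).continuous.norm)
    (Set.eq_univ_of_forall fun z => Set.mem_iUnion.2
      ⟨⟨_, hmaj z⟩, fun i hi => (Set.mem_toFinset.1 hi : ∀ j, ‖G j z‖ ≤ ‖G i z‖)⟩)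
  have norm_eq : ∀ i ∈ s, ∀ j ∈ s, ∀ z, ‖G i z‖ = ‖G j z‖ := fun i hi j hj =>
    norm_eq_of_eventually_norm_eq (hG i) (hG j) <| by
      filter_upwards [mem_interior_iff_mem_nhds.1 hz₀] with z hz
      exact (hz j hj i).antisymm (hz i hi j)
  obtain ⟨i, hi⟩ : s.Nonempty := Finset.card_pos.1 (by omega)
  refine ⟨i, fun z j => ?_⟩
  obtain ⟨l, hl⟩ := Finset.inter_nonempty_of_card_lt_card_add_card
    (Finset.subset_univ s) (Finset.subset_univ {i | ∀ j, ‖G j z‖ ≤ ‖G i z‖}.toFinset)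
    (by rw [Finset.card_univ]; have := hmaj z; omega)
  rw [Finset.mem_inter, Set.mem_toFinset] at hl
  exact (hl.2 j).trans_eq (norm_eq l hl.1 i hi z)

section Tropical

variable {ι : Type*} {U : Filter ι} {k : ι → ℕ}

lemma tendsto_pow_zero_of_norm_lt_one {x : ι → ℂ} {X : ℂ} (hk : Tendsto k U atTop)
    (hx : Tendsto x U (𝓝 X)) (hX : ‖X‖ < 1) : Tendsto (fun n => x n ^ k n) U (𝓝 0) := by
  obtain ⟨ρ, hXρ, hρ⟩ := exists_between hX
  refine squeeze_zero_norm' ?_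
    ((tendsto_pow_atTop_nhds_zero_of_lt_one ((norm_nonneg X).trans hXρ.le) hρ).comp hk)
  filter_upwards [hx.norm.eventually_le_const hXρ] with n hn
  rw [norm_pow]
  exact pow_le_pow_left₀ (norm_nonneg _) hn _

/-- As the exponents tend to infinity, a linear relation between powers degenerates to a tropical
one. -/
lemma exists_norm_le_of_sum_pow_eq_zero [U.NeBot] {κ : Type*} {s : Finset κ} {c : κ → ℂ}
    {y : ι → κ → ℂ} {Y : κ → ℂ} {i : κ} (hk : Tendsto k U atTop)
    (hy : ∀ j ∈ s, Tendsto (fun n => y n j) U (𝓝 (Y j)))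
    (hsum : ∀ n, ∑ j ∈ s, c j * y n j ^ k n = 0) (hi : i ∈ s) (hci : c i ≠ 0) (hYi : Y i ≠ 0) :
    ∃ j ∈ s, j ≠ i ∧ ‖Y i‖ ≤ ‖Y j‖ := by
  classical
  by_contra! hlt
  have hrest : Tendsto (fun n => ∑ j ∈ s.erase i, c j * (y n j / y n i) ^ k n) U (𝓝 0) := by
    rw [← Finset.sum_const_zero (s := s.erase i)]
    refine tendsto_finsetSum _ fun j hj => ?_
    obtain ⟨hji, hjs⟩ := Finset.mem_erase.1 hj
    have hratio : ‖Y j / Y i‖ < 1 := by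
      rw [norm_div, div_lt_one (norm_pos_iff.2 hYi)]
      exact hlt j hjs hji
    simpa only [mul_zero] using
      (tendsto_pow_zero_of_norm_lt_one (x := fun n => y n j / y n i) hk
        ((hy j hjs).div (hy i hi) hYi) hratio).const_mul (c j)
  refine hci (neg_eq_zero.1 (tendsto_nhds_unique (tendsto_const_nhds.congr' ?_) hrest))
  filter_upwards [(hy i hi).eventually_ne hYi] with n hn
  have hn' := hsum n
  rw [← Finset.add_sum_erase s _ hi, add_comm, add_eq_zero_iff_eq_neg] at hn'
  simp only [div_pow, mul_div_assoc', ← Finset.sum_div]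
  rw [hn', neg_div, mul_div_cancel_right₀ _ (pow_ne_zero _ hn)]

end Tropical

section Units

lemma isProjConst_of_pow {κ : Type*} {f F : ℂ → κ → ℂ} {n : ℕ} (hF : ∀ z i, f z i ^ n = F z i)
    (h : IsProjConst f) : IsProjConst F := fun z w i j => by
  simp only [← hF, ← mul_pow, h z w i j]

variable {κ : Type*} [Fintype κ]

lemma TendstoProj.exists_coord_forall_ne_zero {U : Filter ℕ} [U.NeBot] {f : ℕ → ℂ → κ → ℂ}
    {g : ℂ → κ → ℂ} (h : TendstoProj U f g) (hf : ∀ n, IsEntireCurve (f n)) (hg : IsEntireCurve g)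
    (hf₀ : ∀ n z i, f n z i ≠ 0) : ∃ i, ∀ z, g z i ≠ 0 := by
  obtain ⟨i, hi⟩ := hg.exists_coord_ne_zero 0
  refine ⟨i, fun z hz => ?_⟩
  obtain ⟨y, hy⟩ := (h.frequently_eval_eq_zero hf hg (isHomogeneous_X ℂ i)
    (fun h₀ => hi (by simpa only [eval_X] using h₀ 0)) (by rwa [eval_X])).exists
  exact hf₀ y.1 y.2 i (by rwa [eval_X] at hy)

lemma IsEntireCurve.isProjConst_of_majority {g : ℂ → κ → ℂ} (hg : IsEntireCurve g) {i₀ : κ}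
    (hi₀ : ∀ z, g z i₀ ≠ 0)
    (hmaj : ∀ z, Fintype.card κ < 2 * {i | ‖g z‖ ≤ ‖g z i‖}.toFinset.card) :
    IsProjConst g := by
  have chart_le_iff : ∀ z i, (∀ j, ‖chart g i₀ z j‖ ≤ ‖chart g i₀ z i‖) ↔ ‖g z‖ ≤ ‖g z i‖ :=
    fun z i => by
      simp only [pi_norm_le_iff_of_nonneg (norm_nonneg (g z i)), chart_apply, norm_mul,
        mul_le_mul_iff_right₀ (norm_pos_iff.2 (inv_ne_zero (hi₀ z)))]
  obtain ⟨i, hi⟩ := exists_norm_le_of_majority (G := fun j z => chart g i₀ z j)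
    (fun j z => (analyticAt_pi_iff.1 (hg.analyticAt_chart (hi₀ z)) j).differentiableAt)
    (by simpa only [chart_le_iff] using hmaj)
  refine StaysInChart.isProjConst hg ⟨i, fun w _ => ?_⟩
  linarith [(chart_le_iff w i).1 (hi w), norm_nonneg (g w i)]

lemma card_lt_two_mul_card_norm_le {ι : Type*} {U : Filter ι} [U.NeBot] {k : ι → ℕ}
    (hk : Tendsto k U atTop) {x : ι → κ → ℂ} {X : κ → ℂ} (hX : X ≠ 0)
    (hx : ∀ m, X m ≠ 0 → Tendsto (fun n => (x n m)⁻¹ • x n) U (𝓝 ((X m)⁻¹ • X)))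
    {N : ℕ} (hN : 2 * N < Fintype.card κ) (hrel : ∀ s : Finset κ, s.card = N + 2 →
      ∃ c : κ → ℂ, (∀ i ∈ s, c i ≠ 0) ∧ ∀ n, ∑ i ∈ s, c i * x n i ^ k n = 0) :
    Fintype.card κ < 2 * {i | ‖X‖ ≤ ‖X i‖}.toFinset.card := by
  classical
  by_contra! hminority
  obtain ⟨m, hm⟩ := exists_norm_le_coord hX
  have hmne : X m ≠ 0 := coord_ne_zero_of_norm_le hX (by rwa [one_mul])
  obtain ⟨t, htM, ht⟩ := Finset.exists_subset_card_eq (s := {i | ‖X‖ ≤ ‖X i‖}.toFinsetᶜ)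
    (n := N + 1) (by rw [Finset.card_compl]; omega)
  have hmt : m ∉ t := fun h => Finset.mem_compl.1 (htM h) (Set.mem_toFinset.2 hm)
  obtain ⟨c, hc, hsum⟩ := hrel (insert m t) (by rw [Finset.card_insert_of_notMem hmt, ht])
  obtain ⟨j, hj, hjm, hle⟩ := exists_norm_le_of_sum_pow_eq_zero hk
    (fun j _ => tendsto_pi_nhds.1 (hx m hmne) j)
    (fun n => by
      simp only [Pi.smul_apply, smul_eq_mul, mul_pow, mul_left_comm (c _), ← Finset.mul_sum, hsum,
        mul_zero])
    (Finset.mem_insert_self m t) (hc m (Finset.mem_insert_self m t))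
    (mul_ne_zero (inv_ne_zero hmne) hmne)
  simp only [Pi.smul_apply, smul_eq_mul, norm_mul,
    mul_le_mul_iff_right₀ (norm_pos_iff.2 (inv_ne_zero hmne))] at hle
  exact Finset.mem_compl.1 (htM ((Finset.mem_insert.1 hj).resolve_left hjm))
    (Set.mem_toFinset.2 (hm.trans hle))

/-- The relations force the rescaled limit of the curves of `n`-th roots to have, at every point,
more than half of its coordinates of maximal modulus. -/
theorem isProjConst_of_relations {F : ℂ → κ → ℂ} (hF : Differentiable ℂ F)
    (hF₀ : ∀ z i, F z i ≠ 0) {N : ℕ} (hN : 2 * N < Fintype.card κ)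
    (hrel : ∀ s : Finset κ, s.card = N + 2 →
      ∃ c : κ → ℂ, (∀ i ∈ s, c i ≠ 0) ∧ ∀ z, ∑ i ∈ s, c i * F z i = 0) : IsProjConst F := by
  by_contra hnc
  have : Nonempty κ := Fintype.card_pos_iff.1 (by omega)
  choose f hf hpow using fun (n : ℕ) i =>
    exists_entire_pow_eq (differentiable_pi.1 hF i) (fun z => hF₀ z i) n.succ_ne_zero
  have hf₀ : ∀ n i z, f n i z ≠ 0 := fun n i z hz => hF₀ z i (by
    rw [← hpow n i z, hz, zero_pow n.succ_ne_zero])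
  have hcurve : ∀ n, IsEntireCurve fun z i => f n i z := fun n =>
    isEntireCurve_of_differentiable (differentiable_pi.2 (hf n)) fun z hz =>
      hf₀ n _ z (congrFun hz (Classical.arbitrary κ))
  obtain ⟨a, b, g, hg, hgnc, hlim⟩ := exists_reparametrization_tendstoProj hcurve fun n hconst =>
    hnc (isProjConst_of_pow (fun z i => hpow n i z) hconst)
  obtain ⟨i₀, hi₀⟩ := hlim.exists_coord_forall_ne_zero (fun n => (hcurve n).comp_affine _ _) hg
    fun n z i => hf₀ n i _
  refine hgnc (hg.isProjConst_of_majority hi₀ fun z => ?_)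
  refine card_lt_two_mul_card_norm_le (x := fun n i => f n i (a n + b n * z))
    ((tendsto_add_atTop_nat 1).mono_left Nat.hyperfilter_le_atTop) (hg.ne_zero z)
    (fun m hm => tendsto_section_of_tendsto_prod_nhds
      (F := fun n => chart (fun z i => f n i (a n + b n * z)) m) (hlim z m hm)) hN fun s hs => ?_
  obtain ⟨c, hc, hsum⟩ := hrel s hs
  exact ⟨c, hc, fun n => by simp only [hpow, hsum]⟩

end Units

section LinearForms

variable {K V ι : Type*} [Field K] [AddCommGroup V] [Module K V] [FiniteDimensional K V]
  {L : ι → Module.Dual K V}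

lemma exists_ne_zero_forall_apply_eq_zero (L : ι → Module.Dual K V) {s : Finset ι}
    (hs : s.card < Module.finrank K V) : ∃ v ≠ 0, ∀ i ∈ s, L i v = 0 := by
  have hker := LinearMap.ker_ne_bot_of_finrank_lt (f := LinearMap.pi fun i : s => L i)
    (by rwa [Module.finrank_fintype_fun_eq_card, Fintype.card_coe])
  obtain ⟨v, hv, hv₀⟩ := (Submodule.ne_bot_iff _).1 hker
  exact ⟨v, hv₀, fun i hi => congrFun (LinearMap.mem_ker.1 hv) ⟨i, hi⟩⟩

lemma exists_sum_smul_eq_zero_of_forall_ker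
    (hL : ∀ s : Finset ι, s.card = Module.finrank K V → ∀ v, (∀ i ∈ s, L i v = 0) → v = 0)
    {s : Finset ι} (hs : s.card = Module.finrank K V + 1) :
    ∃ c : ι → K, (∀ i ∈ s, c i ≠ 0) ∧ ∑ i ∈ s, c i • L i = 0 := by
  classical
  have hdep : ¬ LinearIndepOn K L (s : Set ι) := fun h => by
    have hcard : Fintype.card s ≤ _ := LinearIndependent.fintype_card_le_finrank h
    rw [Subspace.dual_finrank_eq, Fintype.card_coe] at hcard
    omega
  obtain ⟨c, hsum, i, his, hci⟩ : ∃ c : ι → K, ∑ i ∈ s, c i • L i = 0 ∧ ∃ i ∈ s, c i ≠ 0 := by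
    simpa [linearIndepOn_finset_iff] using hdep
  refine ⟨c, fun j hjs hcj => ?_, hsum⟩
  have hij : i ≠ j := fun h => hci (h ▸ hcj)
  have hi : i ∈ s.erase j := Finset.mem_erase.2 ⟨hij, his⟩
  have hcard : (s.erase j).card = Module.finrank K V := by
    rw [Finset.card_erase_of_mem hjs, hs, Nat.add_sub_cancel]
  obtain ⟨v, hv₀, hv⟩ := exists_ne_zero_forall_apply_eq_zero L (s := (s.erase j).erase i)
    (by rw [← hcard]; exact Finset.card_erase_lt_of_mem hi)
  have hLi : c i * L i v = 0 := by
    have hsum_v := LinearMap.congr_fun hsum v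
    simp only [LinearMap.sum_apply, LinearMap.smul_apply, smul_eq_mul, LinearMap.zero_apply]
      at hsum_v
    rwa [← Finset.add_sum_erase s _ hjs, hcj, zero_mul, zero_add, ← Finset.add_sum_erase _ _ hi,
      Finset.sum_eq_zero fun l hl => by rw [hv l hl, mul_zero], add_zero] at hsum_v
  refine hv₀ (hL _ hcard v fun l hl => ?_)
  obtain rfl | hli := eq_or_ne l i
  · exact (mul_eq_zero.1 hLi).resolve_left hci
  · exact hv l (Finset.mem_erase.2 ⟨hli, hl⟩)

end LinearForms

section Hyperplanes

variable {ι κ : Type*} [Fintype κ] {p : ι → MvPolynomial κ ℂ} {f : ℂ → κ → ℂ}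

/-- The hyperplanes `p i = 0` of the projective space with homogeneous coordinates indexed by `κ`
are in general position: no `card κ` of them have a common point. -/
def InGeneralPosition (p : ι → MvPolynomial κ ℂ) : Prop :=
  ∀ s : Finset ι, s.card = Fintype.card κ → ∀ v, (∀ i ∈ s, eval v (p i) = 0) → v = 0

lemma InGeneralPosition.eq_zero (hgen : InGeneralPosition p) {s : Finset ι}
    (hs : Fintype.card κ ≤ s.card) {v : κ → ℂ} (hv : ∀ i ∈ s, eval v (p i) = 0) : v = 0 := by
  obtain ⟨t, hts, ht⟩ := Finset.exists_subset_card_eq hs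
  exact hgen t ht v fun i hi => hv i (hts hi)

lemma InGeneralPosition.exists_relation (hgen : InGeneralPosition p)
    (hp : ∀ i, (p i).IsHomogeneous 1) {s : Finset ι} (hs : s.card = Fintype.card κ + 1) :
    ∃ c : ι → ℂ, (∀ i ∈ s, c i ≠ 0) ∧ ∀ v, ∑ i ∈ s, c i * eval v (p i) = 0 := by
  choose L hL using fun i => exists_linearMap_eq_eval (hp i)
  simp only [InGeneralPosition, hL] at hgen
  obtain ⟨c, hc, hsum⟩ := exists_sum_smul_eq_zero_of_forall_ker (L := L)
    (by simpa only [Module.finrank_fintype_fun_eq_card] using hgen)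
    (by rw [hs, Module.finrank_fintype_fun_eq_card])
  refine ⟨c, hc, fun v => ?_⟩
  simpa only [LinearMap.sum_apply, LinearMap.smul_apply, smul_eq_mul, LinearMap.zero_apply, hL]
    using LinearMap.congr_fun hsum v

lemma IsEntireCurve.differentiable_eval_mul_inv (hf : IsEntireCurve f) {P Q : MvPolynomial κ ℂ}
    {d : ℕ} (hP : P.IsHomogeneous d) (hQ : Q.IsHomogeneous d) (hQ₀ : ∀ z, eval (f z) Q ≠ 0) :
    Differentiable ℂ fun z => eval (f z) P * (eval (f z) Q)⁻¹ := fun z => by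
  obtain ⟨i, hi⟩ := hf.exists_coord_ne_zero z
  have hquot := (hf.analyticAt_eval_chart hi P).mul ((hf.analyticAt_eval_chart hi Q).inv
    ((eval_chart_eq_zero_iff hQ hi).not.2 (hQ₀ z)))
  refine (hquot.congr ?_).differentiableAt
  filter_upwards [hf.eventually_coord_ne_zero hi] with w hw
  simp only [Pi.mul_apply, Pi.inv_apply, eval_chart hP, eval_chart hQ]
  field_simp

lemma InGeneralPosition.isProjConst_of_minors (hgen : InGeneralPosition p)
    (hp : ∀ i, (p i).IsHomogeneous 1) {s : Finset ι} (hs : Fintype.card κ ≤ s.card) {a : ι}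
    (ha : ∀ z, eval (f z) (p a) ≠ 0) (hminors : ∀ i ∈ s, ∀ z w,
      eval (f w) (p a) * eval (f z) (p i) = eval (f z) (p a) * eval (f w) (p i)) :
    IsProjConst f := fun z w i j => by
  have hproportional : eval (f w) (p a) • f z = eval (f z) (p a) • f w := by
    rw [← sub_eq_zero]
    refine hgen.eq_zero hs fun i hi => ?_
    obtain ⟨L, hL⟩ := exists_linearMap_eq_eval (hp i)
    simp only [hL, map_sub, map_smul, smul_eq_mul, sub_eq_zero]
    simpa only [hL] using hminors i hi z w
  have hi := congrFun hproportional i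
  have hj := congrFun hproportional j
  simp only [Pi.smul_apply, smul_eq_mul] at hi hj
  refine mul_left_cancel₀ (ha w) ?_
  linear_combination f w j * hi - f w i * hj

/-- The theorem of Bloch and Green, for a curve contained in the intersection of the hyperplanes
indexed by `T` and avoiding those indexed by `A`. -/
theorem InGeneralPosition.isProjConst (hgen : InGeneralPosition p)
    (hp : ∀ i, (p i).IsHomogeneous 1) (hf : IsEntireCurve f) {T A : Finset ι}
    (hTA : Disjoint T A) (hT : ∀ i ∈ T, ∀ z, eval (f z) (p i) = 0)
    (hA : ∀ i ∈ A, ∀ z, eval (f z) (p i) ≠ 0)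
    (hcard : 2 * Fintype.card κ < 2 * T.card + A.card + 2) : IsProjConst f := by
  classical
  have hT_card : T.card < Fintype.card κ := by
    by_contra! h
    exact hf.ne_zero 0 (hgen.eq_zero h fun i hi => hT i hi 0)
  obtain ⟨a, ha⟩ : A.Nonempty := Finset.card_pos.1 (by omega)
  have ha₀ := hA a ha
  have hunits : IsProjConst fun z (i : A) => eval (f z) (p i) * (eval (f z) (p a))⁻¹ := by
    refine isProjConst_of_relations (N := Fintype.card κ - 1 - T.card)
      (differentiable_pi.2 fun i => hf.differentiable_eval_mul_inv (hp i) (hp a) ha₀)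
      (fun z i => mul_ne_zero (hA i i.2 z) (inv_ne_zero (ha₀ z)))
      (by rw [Fintype.card_coe]; omega) fun s hs => ?_
    have hdisj : Disjoint T (s.map (Function.Embedding.subtype (· ∈ A))) :=
      hTA.mono_right fun i hi => Finset.property_of_mem_map_subtype s hi
    obtain ⟨c, hc, hsum⟩ := hgen.exists_relation hp
      (s := T.disjUnion (s.map (Function.Embedding.subtype (· ∈ A))) hdisj)
      (by rw [Finset.card_disjUnion, Finset.card_map, hs]; omega)
    refine ⟨fun i => c i, fun i hi => hc i (Finset.mem_disjUnion.2
      (.inr (Finset.mem_map_of_mem (Function.Embedding.subtype (· ∈ A)) hi))), fun z => ?_⟩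
    have hz := hsum (f z)
    rw [Finset.sum_disjUnion, Finset.sum_eq_zero fun i hi => by rw [hT i hi, mul_zero], zero_add,
      Finset.sum_map] at hz
    simp only [← mul_assoc, ← Finset.sum_mul]
    exact mul_eq_zero_of_left hz _
  refine hgen.isProjConst_of_minors hp (s := T.disjUnion A hTA)
    (by rw [Finset.card_disjUnion]; omega) ha₀ fun i hi z w => ?_
  obtain hi | hi := Finset.mem_disjUnion.1 hi
  · rw [hT i hi, hT i hi, mul_zero, mul_zero]
  · have hiw := hunits z w ⟨i, hi⟩ ⟨a, ha⟩
    simp only [mul_inv_cancel₀ (ha₀ _), mul_one, one_mul, ← div_eq_mul_inv] at hiw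
    rw [div_eq_div_iff (ha₀ z) (ha₀ w)] at hiw
    linear_combination hiw

lemma InGeneralPosition.isProjConst_of_point [Fintype ι] (hgen : InGeneralPosition p)
    (hp : ∀ i, (p i).IsHomogeneous 1) (hf : IsEntireCurve f) {T : Finset ι}
    (hT : ∀ i ∈ T, ∀ z, eval (f z) (p i) = 0) (hcard : T.card + 1 = Fintype.card κ)
    (hι : Fintype.card κ ≤ Fintype.card ι) : IsProjConst f := by
  classical
  obtain ⟨i, -, hi⟩ := Finset.exists_mem_notMem_of_card_lt_card
    (s := T) (t := Finset.univ) (by rw [Finset.card_univ]; omega)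
  refine hgen.isProjConst hp hf (Finset.disjoint_singleton_right.2 hi) hT (fun j hj z hz => ?_)
    (by rw [Finset.card_singleton]; omega)
  rw [Finset.mem_singleton.1 hj] at hz
  exact hf.ne_zero z (hgen (insert i T) (by rw [Finset.card_insert_of_notMem hi, hcard]) _
    ((Finset.forall_mem_insert _ _ _).2 ⟨hz, fun j hj => hT j hj z⟩))

end Hyperplanes

end BlochGreen

section Limits

variable {κ : Type*} [Fintype κ] {U : Filter ℕ} [U.NeBot] {f : ℕ → ℂ → κ → ℂ} {g : ℂ → κ → ℂ}
  {d e : ℕ} {P Q R : MvPolynomial κ ℂ} {a : ℕ → ℂ}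

lemma TendstoProj.eval_eq_zero_of_eventually (h : TendstoProj U f g) (hg : IsEntireCurve g)
    (hP : P.IsHomogeneous d) (hQ : Q.IsHomogeneous d) (ha : Tendsto a U (𝓝 0))
    (H : ∀ᶠ n in U, ∀ w, eval (f n w) P = a n * eval (f n w) Q) (z : ℂ) : eval (g z) P = 0 :=
  h.eval_eq_zero_of_frequently hg hP hQ ha
    ((H.prod_inl (𝓝 z)).mono fun y hy => hy y.2).frequently

lemma TendstoProj.eval_eq_zero_of_eventually_on_zeros (h : TendstoProj U f g)
    (hf : ∀ n, IsEntireCurve (f n)) (hg : IsEntireCurve g) (hP : P.IsHomogeneous d)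
    (hQ : Q.IsHomogeneous e) (hR : R.IsHomogeneous e) (ha : Tendsto a U (𝓝 0))
    (H : ∀ᶠ n in U, ∀ w, eval (f n w) P = 0 → eval (f n w) Q = a n * eval (f n w) R)
    (hgP : ¬ ∀ w, eval (g w) P = 0) {z : ℂ} (hz : eval (g z) P = 0) : eval (g z) Q = 0 :=
  h.eval_eq_zero_of_frequently hg hQ hR ha
    (((h.frequently_eval_eq_zero hf hg hP hgP hz).and_eventually (H.prod_inl (𝓝 z))).mono
      fun y hy => hy.2 y.2 hy.1)

end Limits

section Deformation

variable {ι : Type*} {p : ι → MvPolynomial (Fin 4) ℂ} {s h : MvPolynomial (Fin 4) ℂ}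
  {A : Set (Sym2 ι)} {D : Sym2 ι} {k l : ι} {f g : ℂ → Fin 4 → ℂ} {d : ℕ}

/-- The surface `s = 0` is in general position with respect to the planes `p i = 0`. -/
def AvoidsTriplePoints (p : ι → MvPolynomial (Fin 4) ℂ) (s : MvPolynomial (Fin 4) ℂ) : Prop :=
  ∀ v : Fin 4 → ℂ, v ≠ 0 →
    (∃ i j k, i ≠ j ∧ i ≠ k ∧ j ≠ k ∧ eval v (p i) = 0 ∧ eval v (p j) = 0 ∧ eval v (p k) = 0) →
    eval v s ≠ 0

/-- An entire curve in the plane `p k = 0` that meets the other planes only on the surface `s = 0`,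
and only along double lines `p i = p j = 0` with `s(i, j) ∈ A`. -/
structure IsAdmissible (p : ι → MvPolynomial (Fin 4) ℂ) (s : MvPolynomial (Fin 4) ℂ)
    (A : Set (Sym2 ι)) (k : ι) (f : ℂ → Fin 4 → ℂ) : Prop where
  isEntireCurve : IsEntireCurve f
  eval_eq_zero : ∀ z, eval (f z) (p k) = 0
  meets : ∀ j ≠ k, ∀ z, eval (f z) (p j) = 0 → s(k, j) ∈ A ∧ eval (f z) s = 0

/-- Hyperbolicity of the planes minus their double lines, where the points of the surface `s = 0`
on the double lines indexed by `A` are put back. -/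
def IsHyperbolicArrangement (p : ι → MvPolynomial (Fin 4) ℂ) (s : MvPolynomial (Fin 4) ℂ)
    (A : Set (Sym2 ι)) : Prop :=
  ∀ k f, IsAdmissible p s A k f → IsProjConst f

lemma IsAdmissible.comp_affine (hf : IsAdmissible p s A k f) (a b : ℂ) :
    IsAdmissible p s A k fun z => f (a + b * z) :=
  ⟨hf.isEntireCurve.comp_affine a b, fun _ => hf.eval_eq_zero _, fun j hj _ => hf.meets j hj _⟩

lemma IsAdmissible.of_insert_diag (hf : IsAdmissible p s (insert D A) k f) (hD : D.IsDiag) :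
    IsAdmissible p s A k f where
  isEntireCurve := hf.isEntireCurve
  eval_eq_zero := hf.eval_eq_zero
  meets j hj z hz := (hf.meets j hj z hz).imp_left fun hkj =>
    hkj.resolve_left fun hkj => hj (Sym2.mk_isDiag_iff.1 (hkj ▸ hD)).symm

lemma IsAdmissible.meets_of_ne {c : ℂ} (hf : IsAdmissible p (s + C c * h) (insert D A) k f)
    {j : ι} (hj : j ≠ k) (hD : s(k, j) ≠ D) {z : ℂ} (hz : eval (f z) (p j) = 0)
    (hh : eval (f z) h = 0) : s(k, j) ∈ A ∧ eval (f z) s = 0 := by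
  obtain ⟨hkj, hs⟩ := hf.meets j hj z hz
  rw [map_add, map_mul, hh, mul_zero, add_zero] at hs
  exact ⟨hkj.resolve_left hD, hs⟩

lemma IsAdmissible.of_notMem {c : ℂ} (hf : IsAdmissible p (s + C c * h) (insert D A) k f)
    (hk : k ∉ D) (hh : ∀ v, eval v (p k) = 0 → eval v h = 0) : IsAdmissible p s A k f where
  isEntireCurve := hf.isEntireCurve
  eval_eq_zero := hf.eval_eq_zero
  meets j hj z hz := hf.meets_of_ne hj (fun hD => hk (hD ▸ Sym2.mem_mk_left k j)) hz
    (hh _ (hf.eval_eq_zero z))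

section LimitsOfAdmissibleCurves

variable {U : Filter ℕ} [U.NeBot] {F : ℕ → ℂ → Fin 4 → ℂ}

lemma meets_of_tendsto (hp : ∀ i, (p i).IsHomogeneous 1) (hs : s.IsHomogeneous d)
    (hF : ∀ n, IsEntireCurve (F n)) (hg : IsEntireCurve g) (hFg : TendstoProj U F g)
    (hadm : ∀ᶠ n : ℕ in U, IsAdmissible p (s + C (n : ℂ) * h) (insert D A) k (F n))
    {j : ι} (hj : j ≠ k) (hD : s(k, j) ≠ D) (hh : ∀ v, eval v (p j) = 0 → eval v h = 0)
    (hgj : ¬ ∀ z, eval (g z) (p j) = 0) {z : ℂ} (hz : eval (g z) (p j) = 0) :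
    s(k, j) ∈ A ∧ eval (g z) s = 0 := by
  have hmeets : ∀ᶠ n in U, ∀ w, eval (F n w) (p j) = 0 → s(k, j) ∈ A ∧ eval (F n w) s = 0 :=
    hadm.mono fun n hn w hw => hn.meets_of_ne hj hD hw (hh _ hw)
  constructor
  · obtain ⟨y, hy, hmeets_y⟩ := ((hFg.frequently_eval_eq_zero hF hg (hp j) hgj hz).and_eventually
      (hmeets.prod_inl (𝓝 z))).exists
    exact (hmeets_y y.2 hy).1
  · refine hFg.eval_eq_zero_of_eventually_on_zeros hF hg (hp j) hs hs tendsto_const_nhds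
      (hmeets.mono fun n hn w hw => ?_) hgj hz
    rw [(hn w hw).2, zero_mul]

/-- On the double line `s(k, l)` the curves satisfy `h = -s / n`, so that the deformation term alone
survives in the limit. -/
lemma eval_eq_zero_of_tendsto (hU : U ≤ atTop) (hp : ∀ i, (p i).IsHomogeneous 1)
    (hs : s.IsHomogeneous d) (hh : h.IsHomogeneous d) (hF : ∀ n, IsEntireCurve (F n))
    (hg : IsEntireCurve g) (hFg : TendstoProj U F g)
    (hadm : ∀ᶠ n : ℕ in U, IsAdmissible p (s + C (n : ℂ) * h) A k (F n))
    (hkl : l ≠ k) (hgl : ¬ ∀ z, eval (g z) (p l) = 0) {z : ℂ} (hz : eval (g z) (p l) = 0) :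
    eval (g z) h = 0 := by
  have hlim : Tendsto (fun n : ℕ => -(n : ℂ)⁻¹) U (𝓝 0) := by
    simpa only [neg_zero] using (tendsto_inv_atTop_nhds_zero_nat (𝕜 := ℂ)).neg.mono_left hU
  refine hFg.eval_eq_zero_of_eventually_on_zeros hF hg (hp l) hh hs hlim ?_ hgl hz
  filter_upwards [hadm, hU (eventually_ne_atTop 0)] with n hn hn₀ w hw
  have hsum := (hn.meets l hkl w hw).2
  rw [map_add, map_mul, eval_C] at hsum
  have hn₀' : (n : ℂ) ≠ 0 := Nat.cast_ne_zero.2 hn₀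
  field_simp
  linear_combination hsum

end LimitsOfAdmissibleCurves

variable [Fintype ι]

lemma isProjConst_of_line (hι : 6 ≤ Fintype.card ι) (hp : ∀ i, (p i).IsHomogeneous 1)
    (hgen : InGeneralPosition p) (hs : AvoidsTriplePoints p s) (hg : IsEntireCurve g)
    {j : ι} (hjk : j ≠ k) (hk : ∀ z, eval (g z) (p k) = 0) (hj : ∀ z, eval (g z) (p j) = 0)
    (H : ∀ m, m ≠ k → m ≠ l → (¬ ∀ z, eval (g z) (p m) = 0) →
      ∀ z, eval (g z) (p m) = 0 → eval (g z) s = 0) : IsProjConst g := by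
  classical
  by_cases hpoint : ∃ m, m ≠ k ∧ m ≠ j ∧ ∀ z, eval (g z) (p m) = 0
  · obtain ⟨m, hmk, hmj, hm⟩ := hpoint
    refine hgen.isProjConst_of_point hp hg (T := {m, j, k}) ?_ ?_ (by rw [Fintype.card_fin]; omega)
    · simp only [Finset.mem_insert, Finset.mem_singleton]
      rintro i (rfl | rfl | rfl) <;> assumption
    · rw [Finset.card_eq_three.2 ⟨m, j, k, hmj, hmk, hjk, rfl⟩, Fintype.card_fin]
  · have hA : Fintype.card ι - 3 ≤ ({l, j, k}ᶜ : Finset ι).card := by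
      rw [Finset.card_compl]
      exact Nat.sub_le_sub_left Finset.card_le_three _
    refine hgen.isProjConst hp hg (T := {j, k}) (A := {l, j, k}ᶜ)
      (disjoint_compl_right.mono_left (Finset.subset_insert _ _))
      ?_ (fun m hm z hz => ?_) (by rw [Finset.card_pair hjk, Fintype.card_fin]; omega)
    · simp only [Finset.mem_insert, Finset.mem_singleton]
      rintro i (rfl | rfl) <;> assumption
    · simp only [Finset.mem_compl, Finset.mem_insert, Finset.mem_singleton, not_or] at hm
      obtain ⟨hml, hmj, hmk⟩ := hm
      exact hs (g z) (hg.ne_zero z) ⟨m, j, k, hmj, hmk, hjk, hz, hj z, hk z⟩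
        (H m hmk hml (fun hm => hpoint ⟨m, hmk, hmj, hm⟩) z hz)

lemma isProjConst_of_tendsto_deformation {U : Filter ℕ} [U.NeBot] {F : ℕ → ℂ → Fin 4 → ℂ}
    (hι : 6 ≤ Fintype.card ι) (hp : ∀ i, (p i).IsHomogeneous 1) (hgen : InGeneralPosition p)
    (hs : s.IsHomogeneous d) (hs_avoids : AvoidsTriplePoints p s)
    (hA : IsHyperbolicArrangement p s A) (hh : h.IsHomogeneous d)
    (hh_zero : ∀ v, eval v h = 0 ↔ ∃ m ∉ D, eval v (p m) = 0) (hkD : k ∈ D) (hU : U ≤ atTop)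
    (hF : ∀ n, IsEntireCurve (F n)) (hg : IsEntireCurve g) (hFg : TendstoProj U F g)
    (hadm : ∀ᶠ n : ℕ in U, IsAdmissible p (s + C (n : ℂ) * h) (insert D A) k (F n)) :
    IsProjConst g := by
  obtain ⟨l, rfl⟩ := hkD
  have hgk : ∀ z, eval (g z) (p k) = 0 :=
    hFg.eval_eq_zero_of_eventually hg (hp k) (hp k) tendsto_const_nhds
      (hadm.mono fun n hn w => by rw [hn.eval_eq_zero, mul_zero])
  have hmeets : ∀ j, j ≠ k → j ≠ l → (¬ ∀ z, eval (g z) (p j) = 0) →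
      ∀ z, eval (g z) (p j) = 0 → s(k, j) ∈ A ∧ eval (g z) s = 0 := fun j hjk hjl hgj z hz =>
    meets_of_tendsto hp hs hF hg hFg hadm hjk (fun hD => hjl (Sym2.congr_right.1 hD))
      (fun v hv => (hh_zero v).2 ⟨j, by simp only [Sym2.mem_iff, hjk, hjl, or_self,
        not_false_eq_true], hv⟩) hgj hz
  by_cases hline : ∃ j ≠ k, ∀ z, eval (g z) (p j) = 0
  · obtain ⟨j, hjk, hgj⟩ := hline
    exact isProjConst_of_line hι hp hgen hs_avoids hg hjk hgk hgj
      fun m hmk hml hgm z hz => (hmeets m hmk hml hgm z hz).2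
  · have hplane : ∀ j ≠ k, ¬ ∀ z, eval (g z) (p j) = 0 := fun j hjk hgj => hline ⟨j, hjk, hgj⟩
    refine hA k g ⟨hg, hgk, fun j hjk z hz => ?_⟩
    obtain rfl | hjl := eq_or_ne j l
    · obtain ⟨m, hmD, hm⟩ := (hh_zero (g z)).1
        (eval_eq_zero_of_tendsto hU hp hs hh hF hg hFg hadm hjk (hplane j hjk) hz)
      simp only [Sym2.mem_iff, not_or] at hmD
      exact absurd (hmeets m hmD.1 hmD.2 (hplane m hmD.1) z hm).2 (hs_avoids (g z) (hg.ne_zero z)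
        ⟨m, j, k, hmD.2, hmD.1, hjk, hm, hz, hgk z⟩)
    · exact hmeets j hjk hjl (hplane j hjk) z hz

/-- Duval's deformation step. -/
lemma IsHyperbolicArrangement.exists_insert (hι : 6 ≤ Fintype.card ι)
    (hp : ∀ i, (p i).IsHomogeneous 1) (hgen : InGeneralPosition p) (hs : s.IsHomogeneous d)
    (hs_avoids : AvoidsTriplePoints p s) (hA : IsHyperbolicArrangement p s A)
    (hh : h.IsHomogeneous d) (hh_zero : ∀ v, eval v h = 0 ↔ ∃ m ∉ D, eval v (p m) = 0) :
    ∃ n : ℕ, IsHyperbolicArrangement p (s + C (n : ℂ) * h) (insert D A) := by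
  by_contra! hcon
  simp only [IsHyperbolicArrangement, not_forall] at hcon
  choose k f hadm hnc using hcon
  have hkD : ∀ n, k n ∈ D := fun n => by
    by_contra hkD
    exact hnc n (hA _ _ ((hadm n).of_notMem hkD fun v hv => (hh_zero v).2 ⟨k n, hkD, hv⟩))
  obtain ⟨a, b, g, hg, hg_nc, hfg⟩ :=
    exists_reparametrization_tendstoProj (fun n => (hadm n).isEntireCurve) hnc
  obtain ⟨k₀, hk₀⟩ : ∃ k₀, ∀ᶠ n in (hyperfilter ℕ : Filter ℕ), k n = k₀ :=
    Ultrafilter.eventually_exists_iff.1 (.of_forall fun n => ⟨k n, rfl⟩)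
  obtain ⟨n₀, hn₀⟩ := hk₀.exists
  exact hg_nc (isProjConst_of_tendsto_deformation hι hp hgen hs hs_avoids hA hh hh_zero
    (hn₀ ▸ hkD n₀) Nat.hyperfilter_le_atTop
    (fun n => (hadm n).isEntireCurve.comp_affine (a n) (b n)) hg hfg
    (hk₀.mono fun n hn => hn ▸ (hadm n).comp_affine (a n) (b n)))

end Deformation

section Construction

variable {ι : Type*} {p : ι → MvPolynomial (Fin 4) ℂ} {s h : MvPolynomial (Fin 4) ℂ}

lemma AvoidsTriplePoints.add_mul (hs : AvoidsTriplePoints p s) {D : Sym2 ι}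
    (hh : ∀ m ∉ D, ∀ v, eval v (p m) = 0 → eval v h = 0) (c : ℂ) :
    AvoidsTriplePoints p (s + C c * h) := by
  rintro v hv ⟨i, j, k, hij, hik, hjk, hi, hj, hk⟩
  have hhv : eval v h = 0 := by
    by_contra hhv
    have hD : ∀ m, eval v (p m) = 0 → m ∈ D := fun m hm => by_contra fun hmD => hhv (hh m hmD v hm)
    obtain rfl := (Sym2.mem_and_mem_iff hij).1 ⟨hD i hi, hD j hj⟩
    obtain hki | hkj := Sym2.mem_iff.1 (hD k hk)
    exacts [hik hki.symm, hjk hkj.symm]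
  rw [map_add, map_mul, hhv, mul_zero, add_zero]
  exact hs v hv ⟨i, j, k, hij, hik, hjk, hi, hj, hk⟩

variable [Fintype ι]

lemma exists_isHomogeneous_eval_eq_zero_iff {κ : Type*} {p : ι → MvPolynomial κ ℂ}
    (hp : ∀ i, (p i).IsHomogeneous 1) {B : Finset ι} (hB : B.Nonempty) :
    ∃ q : MvPolynomial κ ℂ, q.IsHomogeneous (Fintype.card ι) ∧
      ∀ v, eval v q = 0 ↔ ∃ m ∈ B, eval v (p m) = 0 := by
  obtain ⟨a, ha⟩ := hB
  refine ⟨(∏ m ∈ B, p m) * p a ^ (Fintype.card ι - B.card), ?_, fun v => ?_⟩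
  · have hdeg := (IsHomogeneous.prod B p (fun _ => 1) fun i _ => hp i).mul
      ((hp a).pow (Fintype.card ι - B.card))
    rwa [Finset.sum_const, smul_eq_mul, mul_one, one_mul,
      Nat.add_sub_cancel' (Finset.card_le_univ B)] at hdeg
  · rw [map_mul, map_prod, map_pow, mul_eq_zero, Finset.prod_eq_zero_iff]
    exact or_iff_left_of_imp fun h => ⟨a, ha, eq_zero_of_pow_eq_zero h⟩

lemma exists_avoidsTriplePoints (hι : 3 < Fintype.card ι) (hp : ∀ i, (p i).IsHomogeneous 1)
    (hgen : InGeneralPosition p) :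
    ∃ s, s.IsHomogeneous (Fintype.card ι) ∧ AvoidsTriplePoints p s := by
  classical
  have hq : ∀ T ∈ Finset.univ.powersetCard 3, ∃ q : MvPolynomial (Fin 4) ℂ,
      q.IsHomogeneous (Fintype.card ι) ∧ ∀ v, eval v q = 0 ↔ ∃ m ∈ Tᶜ, eval v (p m) = 0 := by
    intro T hT
    refine exists_isHomogeneous_eval_eq_zero_iff hp (Finset.card_pos.1 ?_)
    rw [Finset.card_compl, (Finset.mem_powersetCard.1 hT).2]
    omega
  choose! q hq_hom hq_zero using hq
  refine ⟨∑ T ∈ Finset.univ.powersetCard 3, q T, IsHomogeneous.sum _ _ _ hq_hom, ?_⟩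
  rintro v hv ⟨i, j, k, hij, hik, hjk, hi, hj, hk⟩
  have hcard : ({i, j, k} : Finset ι).card = 3 :=
    Finset.card_eq_three.2 ⟨i, j, k, hij, hik, hjk, rfl⟩
  have hmem : {i, j, k} ∈ Finset.univ.powersetCard 3 := Finset.mem_powersetCard_univ.2 hcard
  have hzero : ∀ m ∈ ({i, j, k} : Finset ι), eval v (p m) = 0 := by
    simp only [Finset.mem_insert, Finset.mem_singleton]
    rintro m (rfl | rfl | rfl) <;> assumption
  rw [map_sum, Finset.sum_eq_single_of_mem _ hmem fun T hT hne => ?_, Ne, hq_zero _ hmem]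
  · rintro ⟨m, hm, hvm⟩
    refine hv (hgen (insert m {i, j, k}) ?_ v ((Finset.forall_mem_insert _ _ _).2 ⟨hvm, hzero⟩))
    rw [Finset.card_insert_of_notMem (Finset.mem_compl.1 hm), hcard, Fintype.card_fin]
  · obtain ⟨m, hm, hmT⟩ := Finset.not_subset.1 fun hsub => hne
      (Finset.eq_of_subset_of_card_le hsub (by rw [hcard, (Finset.mem_powersetCard.1 hT).2])).symm
    exact (hq_zero T hT v).2 ⟨m, Finset.mem_compl.2 hmT, hzero m hm⟩

lemma isHyperbolicArrangement_empty (hι : 6 ≤ Fintype.card ι) (hp : ∀ i, (p i).IsHomogeneous 1)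
    (hgen : InGeneralPosition p) : IsHyperbolicArrangement p s ∅ := fun k f hf => by
  classical
  refine hgen.isProjConst hp hf.isEntireCurve (T := {k}) (A := {k}ᶜ) disjoint_compl_right
    (fun i hi => Finset.mem_singleton.1 hi ▸ hf.eval_eq_zero) (fun j hj z hz => ?_) ?_
  · exact (hf.meets j (by simpa only [Finset.mem_compl, Finset.mem_singleton] using hj) z hz).1
  · rw [Finset.card_compl, Finset.card_singleton, Fintype.card_fin]
    omega

theorem exists_isHyperbolicArrangement (hι : 6 ≤ Fintype.card ι)
    (hp : ∀ i, (p i).IsHomogeneous 1) (hgen : InGeneralPosition p) (A : Set (Sym2 ι)) :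
    ∃ s, s.IsHomogeneous (Fintype.card ι) ∧ AvoidsTriplePoints p s ∧
      IsHyperbolicArrangement p s A := by
  classical
  induction A, A.toFinite using Set.Finite.induction_on with
  | empty =>
    obtain ⟨s, hs, hs_avoids⟩ := exists_avoidsTriplePoints (by omega) hp hgen
    exact ⟨s, hs, hs_avoids, isHyperbolicArrangement_empty hι hp hgen⟩
  | @insert D A _ _ ih =>
    obtain ⟨s, hs, hs_avoids, hA⟩ := ih
    by_cases hD : D.IsDiag
    · exact ⟨s, hs, hs_avoids, fun k f hf => hA k f (hf.of_insert_diag hD)⟩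
    · have hB : (Finset.univ.filter (· ∉ D)).Nonempty := by
        obtain ⟨m, -, hm⟩ := Finset.exists_mem_notMem_of_card_lt_card (s := D.toFinset)
          (t := Finset.univ)
          (by rw [Sym2.card_toFinset_of_not_isDiag D hD, Finset.card_univ]; omega)
        exact ⟨m, by simpa using hm⟩
      obtain ⟨h, hh, hh_zero⟩ := exists_isHomogeneous_eval_eq_zero_iff hp hB
      simp only [Finset.mem_filter, Finset.mem_univ, true_and] at hh_zero
      obtain ⟨n, hn⟩ := hA.exists_insert hι hp hgen hs hs_avoids hh hh_zero
      exact ⟨s + C (n : ℂ) * h, hs.add (hh.C_mul n),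
        hs_avoids.add_mul (fun m hm v hv => (hh_zero v).2 ⟨m, hm, hv⟩) n, hn⟩

lemma AvoidsTriplePoints.ne_zero (hs : AvoidsTriplePoints p s) (hι : 3 ≤ Fintype.card ι)
    (hp : ∀ i, (p i).IsHomogeneous 1) : s ≠ 0 := by
  classical
  rintro rfl
  obtain ⟨T, -, hT⟩ := Finset.exists_subset_card_eq (s := (Finset.univ : Finset ι)) hι
  obtain ⟨i, j, k, hij, hik, hjk, rfl⟩ := Finset.card_eq_three.1 hT
  choose L hL using fun i => exists_linearMap_eq_eval (hp i)
  obtain ⟨v, hv, hLv⟩ := exists_ne_zero_forall_apply_eq_zero L (s := {i, j, k})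
    (by rw [hT, Module.finrank_fin_fun]; norm_num)
  simp only [← hL, Finset.mem_insert, Finset.mem_singleton, forall_eq_or_imp, forall_eq] at hLv
  exact hs v hv ⟨i, j, k, hij, hik, hjk, hLv⟩ (map_zero _)

end Construction

section SmallDeformations

variable {ι : Type*} [Fintype ι] {p : ι → MvPolynomial (Fin 4) ℂ} {s : MvPolynomial (Fin 4) ℂ}

lemma isProjConst_of_tendsto_prod_eq_mul {U : Filter ℕ} [U.NeBot] {F : ℕ → ℂ → Fin 4 → ℂ}
    {g : ℂ → Fin 4 → ℂ} {ε : ℕ → ℂ} (hι : 6 ≤ Fintype.card ι) (hp : ∀ i, (p i).IsHomogeneous 1)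
    (hgen : InGeneralPosition p) (hs : s.IsHomogeneous (Fintype.card ι))
    (hs_avoids : AvoidsTriplePoints p s) (hA : IsHyperbolicArrangement p s Set.univ)
    (hε₀ : ∀ n, ε n ≠ 0) (hε : Tendsto ε U (𝓝 0)) (hF : ∀ n, IsEntireCurve (F n))
    (hg : IsEntireCurve g) (hFg : TendstoProj U F g)
    (hFε : ∀ n z, eval (F n z) (∏ i, p i) = ε n * eval (F n z) s) : IsProjConst g := by
  have hprod : (∏ i, p i).IsHomogeneous (Fintype.card ι) := by
    simpa only [Finset.sum_const, Finset.card_univ, smul_eq_mul, mul_one] using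
      IsHomogeneous.prod Finset.univ p (fun _ => 1) fun i _ => hp i
  have hg_prod : ∀ z, ∏ i, eval (g z) (p i) = 0 := fun z => by
    rw [← map_prod]
    exact hFg.eval_eq_zero_of_eventually hg hprod hs hε (.of_forall hFε) z
  have hmeets : ∀ j, (¬ ∀ z, eval (g z) (p j) = 0) → ∀ z, eval (g z) (p j) = 0 →
      eval (g z) s = 0 := fun j hgj z hz => by
    refine hFg.eval_eq_zero_of_eventually_on_zeros hF hg (hp j) hs hs tendsto_const_nhds
      (.of_forall fun n w hw => ?_) hgj hz
    have hFw := hFε n w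
    rw [map_prod, Finset.prod_eq_zero (Finset.mem_univ j) hw, zero_eq_mul] at hFw
    rw [hFw.resolve_left (hε₀ n), mul_zero]
  obtain ⟨k, hk⟩ : ∃ k, ∀ z, eval (g z) (p k) = 0 := by
    by_contra! hcon
    obtain ⟨w, hw⟩ := (eventually_all.2 fun k =>
      (hg.eval_eq_zero_or_eventually_ne_zero (hp k)).resolve_left (not_forall.2 (hcon k)) 0).exists
    exact Finset.prod_ne_zero_iff.2 (fun i _ => hw i) (hg_prod w)
  by_cases hline : ∃ j ≠ k, ∀ z, eval (g z) (p j) = 0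
  · obtain ⟨j, hjk, hgj⟩ := hline
    exact isProjConst_of_line (l := k) hι hp hgen hs_avoids hg hjk hk hgj
      fun m _ _ hgm => hmeets m hgm
  · exact hA k g ⟨hg, hk, fun j hjk z hz =>
      ⟨Set.mem_univ _, hmeets j (fun hgj => hline ⟨j, hjk, hgj⟩) z hz⟩⟩

theorem IsHyperbolicArrangement.exists_forall_isProjConst (hι : 6 ≤ Fintype.card ι)
    (hp : ∀ i, (p i).IsHomogeneous 1) (hgen : InGeneralPosition p)
    (hs : s.IsHomogeneous (Fintype.card ι)) (hs_avoids : AvoidsTriplePoints p s)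
    (hA : IsHyperbolicArrangement p s Set.univ) :
    ∃ ε₀ : ℝ, 0 < ε₀ ∧ ∀ ε : ℂ, ε ≠ 0 → ‖ε‖ < ε₀ → ∀ f : ℂ → Fin 4 → ℂ, IsEntireCurve f →
      (∀ z, eval (f z) (∏ i, p i) = ε * eval (f z) s) → IsProjConst f := by
  by_contra! hcon
  choose ε hε₀ hε f hf hfε hnc using fun n : ℕ => hcon (1 / ((n : ℝ) + 1)) (by positivity)
  obtain ⟨a, b, g, hg, hg_nc, hfg⟩ := exists_reparametrization_tendstoProj hf hnc
  have hε_lim : Tendsto ε atTop (𝓝 0) :=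
    squeeze_zero_norm (fun n => (hε n).le) tendsto_one_div_add_atTop_nhds_zero_nat
  exact hg_nc (isProjConst_of_tendsto_prod_eq_mul hι hp hgen hs hs_avoids hA hε₀
    (hε_lim.mono_left Nat.hyperfilter_le_atTop) (fun n => (hf n).comp_affine (a n) (b n)) hg hfg
    fun n z => hfε n _)

end SmallDeformations

section Projectivization

variable {m : ℕ} {f : ℂ → Projectivization ℂ (Fin m → ℂ)}

lemma HoloToProj.isEntireCurve_rep (hf : HoloToProj f) : IsEntireCurve fun z => (f z).rep :=
  isEntireCurve_of_local_lift fun z => by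
    obtain ⟨W, hW, hz, F, hF, hmk⟩ := hf z
    refine ⟨F, hF.analyticAt (hW.mem_nhds hz), (hmk z hz).1, ?_⟩
    filter_upwards [hW.mem_nhds hz] with w hw
    obtain ⟨hFw, hfw⟩ := hmk w hw
    obtain ⟨c, hc⟩ := Projectivization.exists_smul_eq_mk_rep ℂ (F w) hFw
    exact ⟨c, c.ne_zero, by rw [hfw, ← hc, Units.smul_def]⟩

lemma IsProjConst.eq_of_rep (hf : IsProjConst fun z => (f z).rep) (z w : ℂ) : f z = f w := by
  rw [← (f z).mk_rep, ← (f w).mk_rep]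
  obtain ⟨i, hi⟩ := Function.ne_iff.1 (f w).rep_nonzero
  refine (Projectivization.mk_eq_mk_iff' ℂ _ _ _ _).2 ⟨(f z).rep i / (f w).rep i, ?_⟩
  ext j
  rw [Pi.smul_apply, smul_eq_mul, div_mul_eq_mul_div, div_eq_iff hi]
  exact hf z w i j

end Projectivization

lemma inGeneralPosition_of_forall_four {ι : Type*} {p : ι → MvPolynomial (Fin 4) ℂ}
    (hgen : ∀ i j k l : ι, i ≠ j → i ≠ k → i ≠ l → j ≠ k → j ≠ l → k ≠ l → ∀ v : Fin 4 → ℂ, v ≠ 0 →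
      ¬ (eval v (p i) = 0 ∧ eval v (p j) = 0 ∧ eval v (p k) = 0 ∧ eval v (p l) = 0)) :
    InGeneralPosition p := by
  classical
  intro T hT v hv
  obtain ⟨i, T, hi, rfl, hT₃⟩ := Finset.card_eq_succ.1 hT
  obtain ⟨j, k, l, hjk, hjl, hkl, rfl⟩ := Finset.card_eq_three.1 hT₃
  simp only [Finset.mem_insert, Finset.mem_singleton, not_or, forall_eq_or_imp, forall_eq] at hi hv
  by_contra hv₀
  exact hgen i j k l hi.1 hi.2.1 hi.2.2 hjk hjl hkl v hv₀ hv

theorem hyperbolic_sextic_general {ι : Type*} [Fintype ι] {p : ι → MvPolynomial (Fin 4) ℂ}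
    (hι : 6 ≤ Fintype.card ι) (hp : ∀ i, (p i).IsHomogeneous 1) (hgen : InGeneralPosition p) :
    ∃ s : MvPolynomial (Fin 4) ℂ, s.IsHomogeneous (Fintype.card ι) ∧ s ≠ 0 ∧
      AvoidsTriplePoints p s ∧
      ∃ ε₀ : ℝ, 0 < ε₀ ∧ ∀ ε : ℂ, ε ≠ 0 → ‖ε‖ < ε₀ →
        ∀ f : ℂ → Projectivization ℂ (Fin 4 → ℂ), HoloToProj f →
          (∀ z : ℂ, eval (f z).rep (∏ i, p i) = ε * eval (f z).rep s) →
          ∀ z w : ℂ, f z = f w := by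
  obtain ⟨s, hs, hs_avoids, hA⟩ := exists_isHyperbolicArrangement hι hp hgen Set.univ
  obtain ⟨ε₀, hε₀, hconst⟩ := hA.exists_forall_isProjConst hι hp hgen hs hs_avoids
  exact ⟨s, hs, hs_avoids.ne_zero (by omega) hp, hs_avoids, ε₀, hε₀, fun ε hε hε_lt f hf hfε =>
    (hconst ε hε hε_lt _ hf.isEntireCurve_rep hfε).eq_of_rep⟩

/-- **A hyperbolic sextic.**  Given six planes `(p i = 0)` in general position in `P³(ℂ)`,
there is a sextic `S = (s = 0)`, in general position with respect to the planes, such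
that the sextic surface `Σ_ε = (p 0 ⋯ p 5 = ε s)` is hyperbolic for all sufficiently
small `ε ≠ 0`. -/
theorem hyperbolic_sextic
    (p : Fin 6 → MvPolynomial (Fin 4) ℂ)
    (hp_lin : ∀ i, (p i).IsHomogeneous 1)
    (hp0 : ∀ i, p i ≠ 0)
    -- the six planes are distinct
    (hp_distinct : ∀ i j, i ≠ j → ¬ ∃ c : ℂ, p i = c • p j)
    -- general position: no quadruple point
    (hgen : ∀ i j k l : Fin 6, i ≠ j → i ≠ k → i ≠ l → j ≠ k → j ≠ l → k ≠ l →
      ∀ v : Fin 4 → ℂ, v ≠ 0 →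
        ¬ (eval v (p i) = 0 ∧ eval v (p j) = 0 ∧ eval v (p k) = 0 ∧ eval v (p l) = 0)) :
    ∃ s : MvPolynomial (Fin 4) ℂ, s.IsHomogeneous 6 ∧ s ≠ 0 ∧
      -- `S` is in general position with respect to the planes: it avoids the triple points
      (∀ v : Fin 4 → ℂ, v ≠ 0 →
        (∃ i j k : Fin 6, i ≠ j ∧ i ≠ k ∧ j ≠ k ∧
          eval v (p i) = 0 ∧ eval v (p j) = 0 ∧ eval v (p k) = 0) →
        eval v s ≠ 0) ∧
      -- for all sufficiently small `ε ≠ 0`, the surface `Σ_ε` is hyperbolic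
      ∃ ε₀ : ℝ, 0 < ε₀ ∧ ∀ ε : ℂ, ε ≠ 0 → ‖ε‖ < ε₀ →
        ∀ f : ℂ → Projectivization ℂ (Fin 4 → ℂ), HoloToProj f →
          (∀ z : ℂ, eval (f z).rep (∏ i, p i) = ε * eval (f z).rep s) →
          ∀ z w : ℂ, f z = f w :=
  hyperbolic_sextic_general (Fintype.card_fin 6).ge hp_lin (inGeneralPosition_of_forall_four hgen)
end
end
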